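/- arXiv:1401.4901 — 4 statements merged into one kernel-verified Lean document; each statement's English description precedes it below -/
import Mathlib

section
/- Let Q be of Bethe form of degree N. Then there exist complex numbers z₀,…,z_{2(N+1)} with z_{2(N+1)} = 2κ₊κ₋ cosh(α₊ + α₋ − β₊ + β₋ − (N+1)η)/(sinh ζ₊ sinh ζ₋) such that Z_Q(λ) = Σ_{a=0}^{2(N+1)} z_a cosh^a(2λ) for every λ ∈ ℂ with sinh(2λ) ≠ 0. In particular Z_Q extends to an even entire function satisfying Z_Q(λ + iπ) = Z_Q(λ), i.e. an even trigonometric polynomial of degree 4N + 4. -/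
/-!
Write `c = cosh 2λ` and `s = sinh 2λ`. Up to the factor `sinh (2λ + η) / s`, the term `A(λ) Q(λ - η)`
is a product `h(λ)` of factors of the form `p c + r s + k`, because the hyperbolic functions of `λ`
occur in pairs. Since `s² = c² - 1`, such a product has the form `P(c) + s R(c)`. As `Q` is even, the
other term of `Z_Q` is the image of the first one under `λ ↦ -λ`, that is under `s ↦ -s`, and therefore
`Z_Q = ((c sinh η + s cosh η)(P + s R) - (c sinh η - s cosh η)(P - s R)) / s
     = 2 cosh η P(c) + 2 sinh η c R(c)`,
a polynomial in `c`.

For the leading coefficient, let `p` and `r` be the top coefficients of `P` and `X R`. The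
combinations `p + r` and `p - r`, which govern the growth of `h` as `λ → ±∞`, are multiplicative in `h`
(`HypPoly.mul`), so they are computed factor by factor; the top coefficient of `Z_Q` is
`e^η (p + r) + e^{-η} (p - r)`.
-/

open Complex Finset

noncomputable section

namespace XXZ

/-- `a(λ) = ∏ₙ sinh(λ - ξₙ + η/2)` -/
def aF (N : ℕ) (η : ℂ) (ξ : Fin N → ℂ) (z : ℂ) : ℂ :=
  ∏ n : Fin N, Complex.sinh (z - ξ n + η / 2)

/-- `d(λ) = a(λ - η)` -/
def dF (N : ℕ) (η : ℂ) (ξ : Fin N → ℂ) (z : ℂ) : ℂ := aF N η ξ (z - η)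

/-- `g₊(λ)` -/
def gPlus (η αp βp : ℂ) (z : ℂ) : ℂ :=
  Complex.sinh (z + αp - η / 2) * Complex.cosh (z - βp - η / 2) /
    (Complex.sinh αp * Complex.cosh βp)

/-- `g₋(λ)` -/
def gMinus (η αm βm : ℂ) (z : ℂ) : ℂ :=
  Complex.sinh (z + αm - η / 2) * Complex.cosh (z + βm - η / 2) /
    (Complex.sinh αm * Complex.cosh βm)

/-- `A(λ)` -/
def AF (N : ℕ) (η : ℂ) (ξ : Fin N → ℂ) (αp βp αm βm : ℂ) (z : ℂ) : ℂ :=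
  (-1 : ℂ) ^ N * (Complex.sinh (2 * z + η) / Complex.sinh (2 * z)) *
    gPlus η αp βp z * gMinus η αm βm z * aF N η ξ z * dF N η ξ (-z)

/-- `ζₙ⁽⁰⁾ = ξₙ - η/2` -/
def zeta0 (N : ℕ) (η : ℂ) (ξ : Fin N → ℂ) (n : Fin N) : ℂ := ξ n - η / 2

/-- `ζₙ⁽¹⁾ = ξₙ + η/2` -/
def zeta1 (N : ℕ) (η : ℂ) (ξ : Fin N → ℂ) (n : Fin N) : ℂ := ξ n + η / 2

/-- `g_a(λ)` -/
def gA (N : ℕ) (η : ℂ) (ξ : Fin N → ℂ) (a : Fin N) (z : ℂ) : ℂ :=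
  (Complex.cosh (2 * z) ^ 2 - Complex.cosh η ^ 2) /
      (Complex.cosh (2 * zeta0 N η ξ a) ^ 2 - Complex.cosh η ^ 2) *
    ∏ b ∈ Finset.univ.erase a,
      (Complex.cosh (2 * z) - Complex.cosh (2 * zeta0 N η ξ b)) /
        (Complex.cosh (2 * zeta0 N η ξ a) - Complex.cosh (2 * zeta0 N η ξ b))

/-- `f(λ)` -/
def fF (N : ℕ) (η : ℂ) (ξ : Fin N → ℂ) (ζp ζm κp κm τp τm αp βp αm βm : ℂ) (z : ℂ) : ℂ :=
  (Complex.cosh (2 * z) + Complex.cosh η) / (2 * Complex.cosh η) *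
      (∏ b : Fin N, (Complex.cosh (2 * z) - Complex.cosh (2 * zeta0 N η ξ b)) /
        (Complex.cosh η - Complex.cosh (2 * zeta0 N η ξ b))) *
      AF N η ξ αp βp αm βm (η / 2)
  - (-1 : ℂ) ^ N * ((Complex.cosh (2 * z) - Complex.cosh η) / (2 * Complex.cosh η)) *
      (∏ b : Fin N, (Complex.cosh (2 * z) - Complex.cosh (2 * zeta0 N η ξ b)) /
        (Complex.cosh η + Complex.cosh (2 * zeta0 N η ξ b))) *
      AF N η ξ αp βp αm βm (η / 2 + Real.pi * Complex.I / 2)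
  + (2 : ℂ) ^ ((1 : ℤ) - (N : ℤ)) *
      (κp * κm * Complex.cosh (τp - τm) / (Complex.sinh ζp * Complex.sinh ζm)) *
      (Complex.cosh (2 * z) ^ 2 - Complex.cosh η ^ 2) *
      ∏ b : Fin N, (Complex.cosh (2 * z) - Complex.cosh (2 * zeta0 N η ξ b))

/-- `qₙ`, the explicit expression of the quantum determinant combination. -/
def qF (N : ℕ) (η : ℂ) (ξ : Fin N → ℂ) (αp βp αm βm : ℂ) (n : Fin N) : ℂ :=
  Complex.sinh (2 * η - 2 * ξ n) * Complex.sinh (2 * ξ n + 2 * η) *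
    gPlus η αp βp (ξ n + η / 2) * gPlus η αp βp (η / 2 - ξ n) *
    gMinus η αm βm (ξ n + η / 2) * gMinus η αm βm (η / 2 - ξ n) *
    aF N η ξ (ξ n + η / 2) * dF N η ξ (ξ n - η / 2) *
    aF N η ξ (η / 2 - ξ n) * dF N η ξ (-ξ n - η / 2) /
    (Complex.sinh (η + 2 * ξ n) * Complex.sinh (η - 2 * ξ n))

/-- `Σ_T`, the SOV characterization of the transfer matrix spectrum. -/
def SigmaT (N : ℕ) (η : ℂ) (ξ : Fin N → ℂ) (ζp ζm κp κm τp τm αp βp αm βm : ℂ) :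
    Set (ℂ → ℂ) :=
  { t | ∃ x : Fin N → ℂ,
      (∀ n : Fin N,
        x n * ((∑ a : Fin N, gA N η ξ a (zeta1 N η ξ n) * x a) +
          fF N η ξ ζp ζm κp κm τp τm αp βp αm βm (zeta1 N η ξ n)) =
          qF N η ξ αp βp αm βm n) ∧
      t = fun z => fF N η ξ ζp ζm κp κm τp τm αp βp αm βm z +
        ∑ a : Fin N, gA N η ξ a z * x a }

/-- genericity of the inhomogeneity parameters -/
def Generic (N : ℕ) (η : ℂ) (ξ : Fin N → ℂ) : Prop :=
  (∀ a b : Fin N, a ≠ b → ∀ r : ℤ, |r| ≤ 1 → ∀ k : ℤ,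
      ξ a + ξ b - r * η ≠ Real.pi * Complex.I * k ∧
      ξ a - ξ b - r * η ≠ Real.pi * Complex.I * k) ∧
  ∀ a : Fin N, Complex.cosh (2 * zeta0 N η ξ a) ^ 2 ≠ Complex.cosh η ^ 2

/-- `Y⁽ⁱ'ʳ⁾` -/
def YF (N : ℕ) (η τp τm αp βp αm βm : ℂ) (i : ℕ) (r : ℤ) : ℂ :=
  τm - τp + (-1 : ℂ) ^ i * (((N : ℂ) - 1 - (r : ℂ)) * η + αm + αp + βm - βp)

/-- `X_{k,m}⁽ⁱ⁾` -/
def XF (N : ℕ) (η τp τm αp βp αm βm : ℂ) (i k m : ℕ) : ℂ :=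
  (-1 : ℂ) ^ i * (1 - (N : ℂ)) * η + τm - τp + (-1 : ℂ) ^ k * (αm + βm) -
    (-1 : ℂ) ^ m * (αp - βp) + Real.pi * Complex.I * ((k : ℂ) + (m : ℂ))

/-- the boundary parameters lie in `N_SOV` -/
def InNSOV (N : ℕ) (η τp τm αp βp αm βm : ℂ) : Prop :=
  ∃ k h m n : Fin 2,
    XF N η τp τm αp βp αm βm 0 (k : ℕ) (m : ℕ) = 0 ∧
    XF N η τp τm αp βp αm βm 1 (h : ℕ) (n : ℕ) = 0

/-- `F₀` -/
def F0 (N : ℕ) (η ζp ζm κp κm τp τm αp βp αm βm : ℂ) : ℂ :=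
  2 * κp * κm * (Complex.cosh (τp - τm) -
      Complex.cosh (αp + αm - βp + βm - ((N : ℂ) + 1) * η)) /
    (Complex.sinh ζp * Complex.sinh ζm)

/-- the inhomogeneous term `F(λ)` -/
def FF (N : ℕ) (η : ℂ) (ξ : Fin N → ℂ) (ζp ζm κp κm τp τm αp βp αm βm : ℂ) (z : ℂ) : ℂ :=
  2 ^ N * F0 N η ζp ζm κp κm τp τm αp βp αm βm *
    (Complex.cosh (2 * z) ^ 2 - Complex.cosh η ^ 2) *
    aF N η ξ z * aF N η ξ (-z) * dF N η ξ z * dF N η ξ (-z)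

/-- `Q` is of Bethe form of degree `N` -/
def BetheForm (N : ℕ) (Q : ℂ → ℂ) : Prop :=
  ∃ l : Fin N → ℂ, ∀ z : ℂ,
    Q z = 2 ^ N * ∏ a : Fin N, (Complex.cosh (2 * z) - Complex.cosh (2 * l a))

/-- `Z_Q(λ) = A(λ)Q(λ-η) + A(-λ)Q(λ+η)` -/
def ZZ (N : ℕ) (η : ℂ) (ξ : Fin N → ℂ) (αp βp αm βm : ℂ) (Q : ℂ → ℂ) (z : ℂ) : ℂ :=
  AF N η ξ αp βp αm βm z * Q (z - η) + AF N η ξ αp βp αm βm (-z) * Q (z + η)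

/-- `t` is a trigonometric polynomial of degree `M` -/
def IsTrigPolyDeg (M : ℕ) (t : ℂ → ℂ) : Prop :=
  ∃ P : Polynomial ℂ, P.natDegree = M ∧
    ∀ z : ℂ, Complex.exp ((M : ℂ) * z) * t z = Polynomial.eval (Complex.exp (2 * z)) P

/-- `t` is a trigonometric polynomial -/
def IsTrigPoly (t : ℂ → ℂ) : Prop := ∃ M : ℕ, IsTrigPolyDeg M t

/-- `Σ_Q` -/
def SigmaQ (N : ℕ) (η : ℂ) (ξ : Fin N → ℂ) (ζp ζm κp κm τp τm αp βp αm βm : ℂ) :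
    Set (ℂ → ℂ) :=
  { Q | BetheForm N Q ∧ ∃ t : ℂ → ℂ, IsTrigPoly t ∧
      ∀ z : ℂ, Complex.sinh (2 * z) ≠ 0 →
        ZZ N η ξ αp βp αm βm Q z + FF N η ξ ζp ζm κp κm τp τm αp βp αm βm z = t z * Q z }

open Polynomial in
/-- `h(λ) = P(cosh 2λ) + sinh 2λ · R(cosh 2λ)` with `P` and `X R` of degree at most `M`; the numbers
`u` and `v` are the sum and the difference of the coefficients of degree `M` of `P` and `X R`.
Using `X R` rather than `R` avoids a truncated `M - 1`; for `M = 0` the bound forces `R = 0`. -/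
def HypPoly (M : ℕ) (u v : ℂ) (h : ℂ → ℂ) : Prop :=
  ∃ P R : ℂ[X], P.natDegree ≤ M ∧ (X * R).natDegree ≤ M ∧
    P.coeff M + (X * R).coeff M = u ∧ P.coeff M - (X * R).coeff M = v ∧
    ∀ z, h z = P.eval (Complex.cosh (2 * z)) +
      Complex.sinh (2 * z) * R.eval (Complex.cosh (2 * z))

open Polynomial in
lemma HypPoly.const (k : ℂ) : HypPoly 0 k k (fun _ => k) :=
  ⟨C k, 0, by simp, by simp, by simp, by simp, by simp⟩

open Polynomial in
/-- The elementary factors: trigonometric polynomials of degree one in `2λ`. -/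
lemma HypPoly.linear (p r k : ℂ) :
    HypPoly 1 (p + r) (p - r)
      (fun z => p * Complex.cosh (2 * z) + r * Complex.sinh (2 * z) + k) := by
  refine ⟨C p * X + C k, C r, by compute_degree, by compute_degree, ?_, ?_, fun z => ?_⟩
  · simp [coeff_C]
  · simp [coeff_C]
  · simp; ring

open Polynomial in
/-- In the product `(P + s R)(P₁ + s R₁)` the part `s² R R₁ = (c² - 1) R R₁` contributes to the top
coefficient only through `c² R R₁`, since `R R₁` has degree at most two less. -/
lemma HypPoly.mul {M M' : ℕ} {u v u' v' : ℂ} {h h' : ℂ → ℂ}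
    (H : HypPoly M u v h) (H' : HypPoly M' u' v' h') :
    HypPoly (M + M') (u * u') (v * v') (fun z => h z * h' z) := by
  obtain ⟨P, R, hP, hR, hu, hv, hh⟩ := H
  obtain ⟨P', R', hP', hR', hu', hv', hh'⟩ := H'
  have hXX : ((X * R) * (X * R')).natDegree ≤ M + M' := natDegree_mul_le_of_le hR hR'
  have hRR : (R * R').natDegree ≤ M + M' := by
    rcases eq_or_ne (R * R') 0 with h0 | h0
    · simp [h0]
    · refine le_trans ?_ hXX
      rw [show (X * R) * (X * R') = (R * R') * X ^ 2 by ring, natDegree_mul_X_pow 2 h0]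
      omega
  have hRRc : (R * R').coeff (M + M') = 0 := by
    have : ((R * R') * X ^ 2).coeff (M + M' + 2) = 0 :=
      coeff_eq_zero_of_natDegree_lt (by
        rw [show (R * R') * X ^ 2 = (X * R) * (X * R') by ring]; omega)
    rwa [coeff_mul_X_pow] at this
  have hPP : (P * P' + ((X * R) * (X * R') - R * R')).coeff (M + M') =
      P.coeff M * P'.coeff M' + (X * R).coeff M * (X * R').coeff M' := by
    rw [coeff_add, coeff_sub, hRRc, coeff_mul_add_eq_of_natDegree_le hP hP',
      coeff_mul_add_eq_of_natDegree_le hR hR', sub_zero]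
  have hXR : X * (P * R' + R * P') = P * (X * R') + (X * R) * P' := by ring
  have hPR : (X * (P * R' + R * P')).coeff (M + M') =
      P.coeff M * (X * R').coeff M' + (X * R).coeff M * P'.coeff M' := by
    rw [hXR, coeff_add, coeff_mul_add_eq_of_natDegree_le hP hR', coeff_mul_add_eq_of_natDegree_le hR hP']
  refine ⟨P * P' + ((X * R) * (X * R') - R * R'), P * R' + R * P', ?_, ?_, ?_, ?_, fun z => ?_⟩
  · exact natDegree_add_le_of_degree_le (natDegree_mul_le_of_le hP hP')
      ((natDegree_sub_le_of_le hXX hRR).trans (max_self _).le)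
  · rw [hXR]
    exact natDegree_add_le_of_degree_le (natDegree_mul_le_of_le hP hR')
      (natDegree_mul_le_of_le hR hP')
  · rw [hPP, hPR, ← hu, ← hu']; ring
  · rw [hPP, hPR, ← hv, ← hv']; ring
  · have hs := Complex.sinh_sq (2 * z)
    simp only [hh, hh', eval_add, eval_sub, eval_mul, eval_X]
    linear_combination (R.eval (Complex.cosh (2 * z)) * R'.eval (Complex.cosh (2 * z))) * hs

lemma HypPoly.prod {ι : Type*} (t : Finset ι) (u v : ℂ) (h : ι → ℂ → ℂ)
    (H : ∀ i, HypPoly 1 u v (h i)) :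
    HypPoly t.card (u ^ t.card) (v ^ t.card) (fun z => ∏ i ∈ t, h i z) := by
  classical
  induction t using Finset.induction_on with
  | empty => simpa using HypPoly.const 1
  | insert i t hi ih =>
    simp only [Finset.prod_insert hi, Finset.card_insert_of_notMem hi]
    have := (H i).mul ih
    rwa [← pow_succ', ← pow_succ', add_comm 1] at this

lemma HypPoly.cosh_sub (b k : ℂ) :
    HypPoly 1 (Complex.exp b) (Complex.exp (-b)) (fun z => Complex.cosh (2 * z + b) - k) := by
  have := HypPoly.linear (Complex.cosh b) (Complex.sinh b) (-k)
  rw [Complex.cosh_add_sinh, Complex.cosh_sub_sinh] at this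
  convert this using 2 with z
  rw [Complex.cosh_add]; ring

/-- The factor of `g±`, rewritten as `(sinh (2λ + x + y) + sinh (x - y)) / 2`. -/
lemma HypPoly.sinh_mul_cosh (x y : ℂ) :
    HypPoly 1 (Complex.exp (x + y) / 2) (-Complex.exp (-(x + y)) / 2)
      (fun z => Complex.sinh (z + x) * Complex.cosh (z + y)) := by
  have := HypPoly.linear (Complex.sinh (x + y) / 2) (Complex.cosh (x + y) / 2)
    (Complex.sinh (x - y) / 2)
  have e1 := Complex.cosh_add_sinh (x + y)
  have e2 := Complex.cosh_sub_sinh (x + y)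
  convert this using 1
  · rw [← e1]; ring
  · rw [← e2]; ring
  · funext z
    have h1 : Complex.sinh (2 * z) * Complex.cosh (x + y) +
        Complex.cosh (2 * z) * Complex.sinh (x + y) =
          Complex.sinh (z + x) * Complex.cosh (z + y) +
            Complex.cosh (z + x) * Complex.sinh (z + y) := by
      rw [← Complex.sinh_add, ← Complex.sinh_add]; congr 1; ring
    have h2 : Complex.sinh (x - y) = Complex.sinh (z + x) * Complex.cosh (z + y) -
        Complex.cosh (z + x) * Complex.sinh (z + y) := by
      rw [← Complex.sinh_sub]; congr 1; ring
    linear_combination (-1 / 2 : ℂ) * h1 - 1 / 2 * h2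

lemma neg_two_sinh_mul_sinh (z x η : ℂ) :
    -2 * (Complex.sinh (z - x + η / 2) * Complex.sinh (-z - η - x + η / 2)) =
      Complex.cosh (2 * z + η) - Complex.cosh (2 * x) := by
  have h1 : Complex.cosh (2 * z + η) = Complex.cosh ((z - x + η / 2) + (z + x + η / 2)) := by
    congr 1; ring
  have h2 : Complex.cosh (2 * x) = Complex.cosh ((z + x + η / 2) - (z - x + η / 2)) := by
    congr 1; ring
  rw [show -z - η - x + η / 2 = -(z + x + η / 2) by ring, Complex.sinh_neg, h1, h2,
    Complex.cosh_add, Complex.cosh_sub]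
  ring

/-- `A(λ) Q(λ - η)` without the factor `sinh (2λ + η) / sinh 2λ`; the powers `(-1)^N` and `2^N` are
absorbed into the factors indexed by the inhomogeneities. -/
def hCore (N : ℕ) (η : ℂ) (ξ l : Fin N → ℂ) (αp βp αm βm : ℂ) (z : ℂ) : ℂ :=
  (Complex.sinh αp * Complex.cosh βp * (Complex.sinh αm * Complex.cosh βm))⁻¹ *
    (Complex.sinh (z + (αp - η / 2)) * Complex.cosh (z + (-βp - η / 2))) *
    (Complex.sinh (z + (αm - η / 2)) * Complex.cosh (z + (βm - η / 2))) *
    (∏ n : Fin N, (Complex.cosh (2 * z + η) - Complex.cosh (2 * ξ n))) *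
    ∏ n : Fin N, (Complex.cosh (2 * z + -(2 * η)) - Complex.cosh (2 * l n))

lemma AF_mul_eq (N : ℕ) (η : ℂ) (ξ l : Fin N → ℂ) (αp βp αm βm z : ℂ) :
    AF N η ξ αp βp αm βm z *
        (2 ^ N * ∏ a : Fin N, (Complex.cosh (2 * (z - η)) - Complex.cosh (2 * l a))) =
      Complex.sinh (2 * z + η) / Complex.sinh (2 * z) * hCore N η ξ l αp βp αm βm z := by
  have hp : ∏ n : Fin N, (Complex.cosh (2 * z + η) - Complex.cosh (2 * ξ n)) =
      (-1) ^ N * 2 ^ N * (aF N η ξ z * dF N η ξ (-z)) := by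
    simp only [← neg_two_sinh_mul_sinh, dF, aF, Finset.prod_mul_distrib, Finset.prod_const,
      Finset.card_univ, Fintype.card_fin]
    rw [← mul_pow]; norm_num
  unfold hCore
  rw [hp, AF, gPlus, gMinus, mul_inv]
  rw [show z + (αp - η / 2) = z + αp - η / 2 by ring,
    show z + (-βp - η / 2) = z - βp - η / 2 by ring,
    show z + (αm - η / 2) = z + αm - η / 2 by ring,
    show z + (βm - η / 2) = z + βm - η / 2 by ring,
    show 2 * (z - η) = 2 * z + -(2 * η) by ring]
  simp only [div_eq_mul_inv]
  ring

/-- The two constants are `exp (±(S - (N + 2) η)) / (4 D)` with `S = α₊ + α₋ - β₊ + β₋` and `D` the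
common denominator of `g₊ g₋`. -/
lemma hypPoly_hCore (N : ℕ) (η : ℂ) (ξ l : Fin N → ℂ) (αp βp αm βm : ℂ) :
    HypPoly (2 * (N + 1))
      ((Complex.sinh αp * Complex.cosh βp * (Complex.sinh αm * Complex.cosh βm))⁻¹ / 4 *
        Complex.exp (αp + αm - βp + βm - ((N : ℂ) + 2) * η))
      ((Complex.sinh αp * Complex.cosh βp * (Complex.sinh αm * Complex.cosh βm))⁻¹ / 4 *
        Complex.exp (-(αp + αm - βp + βm - ((N : ℂ) + 2) * η)))
      (hCore N η ξ l αp βp αm βm) := by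
  have H := ((((HypPoly.const
    (Complex.sinh αp * Complex.cosh βp * (Complex.sinh αm * Complex.cosh βm))⁻¹).mul
      (HypPoly.sinh_mul_cosh (αp - η / 2) (-βp - η / 2))).mul
      (HypPoly.sinh_mul_cosh (αm - η / 2) (βm - η / 2))).mul
      (HypPoly.prod (Finset.univ : Finset (Fin N)) _ _ _
        (fun n => HypPoly.cosh_sub η (Complex.cosh (2 * ξ n))))).mul
      (HypPoly.prod (Finset.univ : Finset (Fin N)) _ _ _
        (fun n => HypPoly.cosh_sub (-(2 * η)) (Complex.cosh (2 * l n))))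
  simp only [Finset.card_univ, Fintype.card_fin, ← Complex.exp_nat_mul] at H
  convert H using 1
  · ring
  · rw [show αp + αm - βp + βm - ((N : ℂ) + 2) * η =
      (αp - η / 2 + (-βp - η / 2)) + (αm - η / 2 + (βm - η / 2)) + N * η + N * -(2 * η) by ring,
      Complex.exp_add, Complex.exp_add, Complex.exp_add]
    ring
  · rw [show -(αp + αm - βp + βm - ((N : ℂ) + 2) * η) =
      -(αp - η / 2 + (-βp - η / 2)) + -(αm - η / 2 + (βm - η / 2)) + N * -η + N * -(-(2 * η)) by
        ring,
      Complex.exp_add, Complex.exp_add, Complex.exp_add]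
    ring
  · rfl

/-- Lemma 3.1: for `Q` of Bethe form, `Z_Q` is an even trigonometric
polynomial of degree `4N+4` in the variable `cosh 2λ`, with the prescribed leading
coefficient; in particular its polynomial extension is even and `iπ`-periodic. -/
theorem statement4
    (N : ℕ) (hN : 1 ≤ N) (η : ℂ) (ξ : Fin N → ℂ)
    (ζp ζm κp κm τp τm αp αm βp βm : ℂ)
    (hκp : κp ≠ 0) (hκm : κm ≠ 0)
    (hζp : Complex.sinh ζp ≠ 0) (hζm : Complex.sinh ζm ≠ 0)
    (hαβp : Complex.sinh αp * Complex.cosh βp ≠ 0)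
    (hαβm : Complex.sinh αm * Complex.cosh βm ≠ 0)
    (hrelp1 : Complex.sinh αp * Complex.cosh βp = Complex.sinh ζp / (2 * κp))
    (hrelp2 : Complex.cosh αp * Complex.sinh βp = Complex.cosh ζp / (2 * κp))
    (hrelm1 : Complex.sinh αm * Complex.cosh βm = Complex.sinh ζm / (2 * κm))
    (hrelm2 : Complex.cosh αm * Complex.sinh βm = Complex.cosh ζm / (2 * κm))
    (Q : ℂ → ℂ) (hQ : BetheForm N Q) :
    ∃ zc : ℕ → ℂ,
      zc (2 * (N + 1)) =
        2 * κp * κm * Complex.cosh (αp + αm - βp + βm - ((N : ℂ) + 1) * η) /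
          (Complex.sinh ζp * Complex.sinh ζm) ∧
      (∀ z : ℂ, Complex.sinh (2 * z) ≠ 0 →
        ZZ N η ξ αp βp αm βm Q z =
          ∑ a ∈ Finset.range (2 * (N + 1) + 1), zc a * Complex.cosh (2 * z) ^ a) ∧
      (∀ z : ℂ,
        (∑ a ∈ Finset.range (2 * (N + 1) + 1), zc a * Complex.cosh (2 * (-z)) ^ a) =
          ∑ a ∈ Finset.range (2 * (N + 1) + 1), zc a * Complex.cosh (2 * z) ^ a) ∧
      (∀ z : ℂ,
        (∑ a ∈ Finset.range (2 * (N + 1) + 1), zc a *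
            Complex.cosh (2 * (z + Real.pi * Complex.I)) ^ a) =
          ∑ a ∈ Finset.range (2 * (N + 1) + 1), zc a * Complex.cosh (2 * z) ^ a) := by
  obtain ⟨l, hl⟩ := hQ
  obtain ⟨P, R, hP, hR, hu, hv, hh⟩ := hypPoly_hCore N η ξ l αp βp αm βm
  set T : Polynomial ℂ := Polynomial.C (2 * Complex.cosh η) * P +
    Polynomial.C (2 * Complex.sinh η) * (Polynomial.X * R) with hT
  have hTdeg : T.natDegree ≤ 2 * (N + 1) :=
    Polynomial.natDegree_add_le_of_degree_le
      ((Polynomial.natDegree_C_mul_le _ _).trans hP)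
      ((Polynomial.natDegree_C_mul_le _ _).trans hR)
  refine ⟨T.coeff, ?_, fun z hz => ?_, fun z => ?_, fun z => ?_⟩
  · have htop : T.coeff (2 * (N + 1)) =
        Complex.exp η * (P.coeff (2 * (N + 1)) + (Polynomial.X * R).coeff (2 * (N + 1))) +
        Complex.exp (-η) * (P.coeff (2 * (N + 1)) - (Polynomial.X * R).coeff (2 * (N + 1))) := by
      rw [hT, Polynomial.coeff_add, Polynomial.coeff_C_mul, Polynomial.coeff_C_mul,
        ← Complex.cosh_add_sinh, ← Complex.cosh_sub_sinh]
      ring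
    have e : ∀ w : ℂ, Complex.exp η * Complex.exp (w - ((N : ℂ) + 2) * η) +
        Complex.exp (-η) * Complex.exp (-(w - ((N : ℂ) + 2) * η)) =
          2 * Complex.cosh (w - ((N : ℂ) + 1) * η) := by
      intro w
      rw [← Complex.exp_add, ← Complex.exp_add, Complex.cosh]
      ring_nf
    have e' := e (αp + αm - βp + βm)
    rw [htop, hu, hv, hrelp1, hrelm1]
    calc _ = (Complex.sinh ζp / (2 * κp) * (Complex.sinh ζm / (2 * κm)))⁻¹ / 4 *
          (2 * Complex.cosh (αp + αm - βp + βm - ((N : ℂ) + 1) * η)) := by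
            rw [← e']; ring
      _ = _ := by field_simp; norm_num
  · rw [← Polynomial.eval_eq_sum_range' (Nat.lt_succ_of_le hTdeg)]
    -- evenness of `Q` turns `A(-z) Q(z + η)` into the first term at `-z`
    have hQe : Q (z + η) =
        2 ^ N * ∏ a : Fin N, (Complex.cosh (2 * (-z - η)) - Complex.cosh (2 * l a)) := by
      rw [hl, show 2 * (-z - η) = -(2 * (z + η)) by ring, Complex.cosh_neg]
    rw [ZZ, hQe, hl (z - η), AF_mul_eq, AF_mul_eq, hh z, hh (-z), mul_neg, Complex.cosh_neg,
      Complex.sinh_neg, Complex.sinh_add, Complex.sinh_add, Complex.cosh_neg, Complex.sinh_neg, hT]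
    simp only [Polynomial.eval_add, Polynomial.eval_mul, Polynomial.eval_C, Polynomial.eval_X]
    field_simp
    ring
  · simp only [mul_neg, Complex.cosh_neg]
  · rw [show 2 * (z + Real.pi * Complex.I) = 2 * z + 2 * Real.pi * Complex.I by ring]
    simp only [Complex.cosh_periodic (2 * z)]

end XXZ
end
end

section
/- Assume κ₊ ≠ 0, κ₋ ≠ 0 and Y^{(i,r)} ∉ 2πiℤ for all i ∈ {0,1} and all r ∈ ℤ. Then for every τ ∈ Σ_T the homogeneous Baxter equation τ(λ)Q(λ) = A(λ)Q(λ−η) + A(−λ)Q(λ+η) admits no solution Q that is a nonzero Laurent polynomial in e^{λ}, i.e. there is no Q of the form Q(λ) = Σ_{a=−s}^{r} y_a e^{aλ} (r,s ∈ ℕ, y_a ∈ ℂ, Q not identically zero) satisfying the equation for all λ ∈ ℂ with sinh(2λ) ≠ 0. -/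
/-!
The obstruction is visible in the behaviour of the Baxter equation as `λ → +∞` along the real
axis. There `τ(λ)` and `A(±λ)` all grow at most like `exp((2N+4)λ)`: with `K = κ₊κ₋/(sinh ζ₊ sinh ζ₋)`
and `S = α₊ + α₋ - β₊ + β₋`, the coefficients at that rate are
`K cosh(τ₊-τ₋) / (2·4^N)` for `τ(λ)` (only the last term of `f` contributes, whatever the `x_a`),
and `K exp(±(S + (N-1)η)) / (4·4^N)` for `A(±λ)`. If `R` is the largest index with `y_R ≠ 0`, then
`Q(λ ∓ η)` has leading coefficient `y_R exp(∓Rη)`. Comparing leading coefficients gives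
`cosh(τ₊-τ₋) = cosh(S + (N-1-R)η)`, so `Y^{(0,R)}` or `Y^{(1,R)}` lies in `2πiℤ`.

The leading coefficients are computed with the predicate `Lead f n c`, which is compatible with
sums, products and quotients.
-/

open Complex Finset

noncomputable section

namespace XXZ

/-! ### Growth along the real axis -/

open Filter Topology

/-- `f(t) exp(-n t) → c` as `t → +∞` along the reals. The coefficient `c` may vanish, so this
bounds the exponential growth rate of `f` by `n` and identifies its coefficient there. -/
def Lead (f : ℂ → ℂ) (n : ℤ) (c : ℂ) : Prop :=
  Tendsto (fun t : ℝ => Complex.exp (-((n : ℂ) * (t : ℂ))) * f t) atTop (𝓝 c)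

lemma tendsto_cexp_neg_int (n : ℤ) (hn : 0 < n) :
    Tendsto (fun t : ℝ => Complex.exp (-((n : ℂ) * (t : ℂ)))) atTop (𝓝 0) := by
  rw [tendsto_zero_iff_norm_tendsto_zero]
  have h : ∀ t : ℝ, ‖Complex.exp (-((n : ℂ) * (t : ℂ)))‖ = Real.exp (-((n : ℝ) * t)) := by
    intro t
    rw [Complex.norm_exp]
    simp
  simp only [h]
  apply Real.tendsto_exp_neg_atTop_nhds_zero.comp
  exact tendsto_id.const_mul_atTop (by exact_mod_cast hn)

namespace Lead

variable {f g : ℂ → ℂ} {m n : ℤ} {c d : ℂ}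

lemma mul (hf : Lead f m c) (hg : Lead g n d) :
    Lead (fun z => f z * g z) (m + n) (c * d) := by
  unfold Lead at *
  refine (Tendsto.mul hf hg).congr fun t => ?_
  have : Complex.exp (-(((m + n : ℤ) : ℂ) * (t : ℂ))) =
      Complex.exp (-((m : ℂ) * (t : ℂ))) * Complex.exp (-((n : ℂ) * (t : ℂ))) := by
    rw [← Complex.exp_add]; push_cast; ring_nf
  rw [this]; ring

lemma add (hf : Lead f n c) (hg : Lead g n d) : Lead (fun z => f z + g z) n (c + d) := by
  unfold Lead at *
  exact (Tendsto.add hf hg).congr fun t => by ring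

lemma sub (hf : Lead f n c) (hg : Lead g n d) : Lead (fun z => f z - g z) n (c - d) := by
  unfold Lead at *
  exact (Tendsto.sub hf hg).congr fun t => by ring

lemma const (c : ℂ) : Lead (fun _ => c) 0 c := by
  simp [Lead]

lemma of_lt (hf : Lead f n c) (h : n < m) : Lead f m 0 := by
  have h0 : Lead (fun _ => 1) (m - n) 0 := by
    simpa [Lead] using tendsto_cexp_neg_int (m - n) (by lia)
  simpa using h0.mul hf

lemma congr_coeff (hf : Lead f m c) (hm : m = n) (hc : c = d) : Lead f n d := by
  subst hm hc; exact hf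

lemma div (hf : Lead f m c) (hg : Lead g n d) (hd : d ≠ 0) :
    Lead (fun z => f z / g z) (m - n) (c / d) := by
  unfold Lead at *
  refine (Tendsto.div hf hg hd).congr fun t => ?_
  have : Complex.exp (-(((m - n : ℤ) : ℂ) * (t : ℂ))) =
      Complex.exp (-((m : ℂ) * (t : ℂ))) / Complex.exp (-((n : ℂ) * (t : ℂ))) := by
    rw [← Complex.exp_sub]; push_cast; ring_nf
  simp only [Pi.div_apply]
  rw [this]
  exact mul_div_mul_comm _ _ _ _

lemma div_const (hf : Lead f n c) (d : ℂ) : Lead (fun z => f z / d) n (c / d) := by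
  simpa [div_eq_mul_inv] using hf.mul (const d⁻¹)

lemma sum {ι : Type*} (s : Finset ι) {F : ι → ℂ → ℂ} {C : ι → ℂ}
    (h : ∀ i ∈ s, Lead (F i) n (C i)) :
    Lead (fun z => ∑ i ∈ s, F i z) n (∑ i ∈ s, C i) := by
  unfold Lead at *
  simpa only [Finset.mul_sum] using tendsto_finsetSum s h

lemma prod {ι : Type*} (s : Finset ι) {F : ι → ℂ → ℂ} {C : ι → ℂ}
    (h : ∀ i ∈ s, Lead (F i) n (C i)) :
    Lead (fun z => ∏ i ∈ s, F i z) (s.card * n) (∏ i ∈ s, C i) := by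
  unfold Lead at *
  refine (tendsto_finsetProd s h).congr fun t => ?_
  rw [Finset.prod_mul_distrib, Finset.prod_const, ← Complex.exp_nat_mul]
  congr 2
  push_cast; ring

lemma exp_int (a : ℤ) (c : ℂ) :
    Lead (fun z => Complex.exp ((a : ℂ) * z + c)) a (Complex.exp c) := by
  unfold Lead
  refine tendsto_const_nhds.congr fun t => ?_
  rw [← Complex.exp_add]; congr 1; ring

lemma cosh_pos {k : ℤ} (hk : 0 < k) (c : ℂ) :
    Lead (fun z => Complex.cosh ((k : ℂ) * z + c)) k (Complex.exp c / 2) := by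
  have h := ((exp_int k c).add ((exp_int (-k) (-c)).of_lt (m := k) (by lia))).div_const 2
  have e : (fun z => Complex.cosh ((k : ℂ) * z + c)) = fun z : ℂ =>
      (Complex.exp ((k : ℂ) * z + c) + Complex.exp (((-k : ℤ) : ℂ) * z + -c)) / 2 := by
    funext z; rw [Complex.cosh]; push_cast; ring_nf
  rw [e]
  exact h.congr_coeff rfl (by ring)

lemma sinh_pos {k : ℤ} (hk : 0 < k) (c : ℂ) :
    Lead (fun z => Complex.sinh ((k : ℂ) * z + c)) k (Complex.exp c / 2) := by
  have h := ((exp_int k c).sub ((exp_int (-k) (-c)).of_lt (m := k) (by lia))).div_const 2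
  have e : (fun z => Complex.sinh ((k : ℂ) * z + c)) = fun z : ℂ =>
      (Complex.exp ((k : ℂ) * z + c) - Complex.exp (((-k : ℤ) : ℂ) * z + -c)) / 2 := by
    funext z; rw [Complex.sinh]; push_cast; ring_nf
  rw [e]
  exact h.congr_coeff rfl (by ring)

/-- Reversing the sign of the argument of `cosh` in `cosh_pos`. -/
lemma cosh_neg {k : ℤ} (hk : 0 < k) (c : ℂ) :
    Lead (fun z => Complex.cosh (-((k : ℂ) * z) + c)) k (Complex.exp (-c) / 2) := by
  have e : (fun z => Complex.cosh (-((k : ℂ) * z) + c)) = fun z : ℂ =>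
      Complex.cosh ((k : ℂ) * z + -c) := by
    funext z; rw [← Complex.cosh_neg]; ring_nf
  rw [e]; exact cosh_pos hk _

/-- Reversing the sign of the argument of `sinh` in `sinh_pos`. -/
lemma sinh_neg {k : ℤ} (hk : 0 < k) (c : ℂ) :
    Lead (fun z => Complex.sinh (-((k : ℂ) * z) + c)) k (-(Complex.exp (-c) / 2)) := by
  have e : (fun z => Complex.sinh (-((k : ℂ) * z) + c)) = fun z : ℂ =>
      (-1) * Complex.sinh ((k : ℂ) * z + -c) := by
    funext z
    rw [← neg_eq_neg_one_mul, ← Complex.sinh_neg]; ring_nf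
  rw [e]; exact ((const (-1)).mul (sinh_pos hk _)).congr_coeff (by ring) (by ring)

/-- Leading coefficients are determined by the values at real `t` with `sinh (2t) ≠ 0`, since
only `t = 0` is excluded. -/
lemma unique (hf : Lead f n c) (hg : Lead g n d)
    (h : ∀ z : ℂ, Complex.sinh (2 * z) ≠ 0 → f z = g z) : c = d := by
  unfold Lead at *
  refine tendsto_nhds_unique_of_eventuallyEq hf hg ?_
  filter_upwards [eventually_gt_atTop 0] with t ht
  rw [h t]
  have : Complex.sinh (2 * (t : ℂ)) = ((Real.sinh (2 * t) : ℝ) : ℂ) := by push_cast; rfl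
  rw [this]
  have h2 : 0 < Real.sinh (2 * t) := Real.sinh_pos_iff.2 (by linarith)
  exact_mod_cast h2.ne'

end Lead

/-! ### Leading coefficients of `A(λ)`, `A(-λ)` and `τ(λ)` -/

lemma lead_gPlus (η α β : ℂ) : Lead (gPlus η α β) 2
    (Complex.exp (α - β - η) / (4 * (Complex.sinh α * Complex.cosh β))) := by
  have h := ((Lead.sinh_pos one_pos (α - η / 2)).mul
    (Lead.cosh_pos one_pos (-β - η / 2))).div_const (Complex.sinh α * Complex.cosh β)
  have e : gPlus η α β = fun z =>
      Complex.sinh (((1 : ℤ) : ℂ) * z + (α - η / 2)) *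
        Complex.cosh (((1 : ℤ) : ℂ) * z + (-β - η / 2)) / (Complex.sinh α * Complex.cosh β) := by
    funext z; unfold gPlus
    rw [show z + α - η / 2 = ((1 : ℤ) : ℂ) * z + (α - η / 2) by push_cast; ring,
      show z - β - η / 2 = ((1 : ℤ) : ℂ) * z + (-β - η / 2) by push_cast; ring]
  rw [e]
  refine h.congr_coeff (by norm_num) ?_
  rw [show α - β - η = (α - η / 2) + (-β - η / 2) by ring, Complex.exp_add]
  ring

lemma lead_gPlus_neg (η α β : ℂ) : Lead (fun z => gPlus η α β (-z)) 2
    (-(Complex.exp (-(α - β - η)) / (4 * (Complex.sinh α * Complex.cosh β)))) := by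
  have h := ((Lead.sinh_neg one_pos (α - η / 2)).mul
    (Lead.cosh_neg one_pos (-β - η / 2))).div_const (Complex.sinh α * Complex.cosh β)
  have e : (fun z => gPlus η α β (-z)) = fun z =>
      Complex.sinh (-(((1 : ℤ) : ℂ) * z) + (α - η / 2)) *
        Complex.cosh (-(((1 : ℤ) : ℂ) * z) + (-β - η / 2)) /
          (Complex.sinh α * Complex.cosh β) := by
    funext z; unfold gPlus
    rw [show -z + α - η / 2 = -(((1 : ℤ) : ℂ) * z) + (α - η / 2) by push_cast; ring,
      show -z - β - η / 2 = -(((1 : ℤ) : ℂ) * z) + (-β - η / 2) by push_cast; ring]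
  rw [e]
  refine h.congr_coeff (by norm_num) ?_
  rw [show -(α - β - η) = -(α - η / 2) + -(-β - η / 2) by ring, Complex.exp_add]
  ring

lemma gMinus_eq (η α β : ℂ) : gMinus η α β = gPlus η α (-β) := by
  funext z; simp [gMinus, gPlus]

lemma lead_aF (N : ℕ) (η : ℂ) (ξ : Fin N → ℂ) (c : ℂ) :
    Lead (fun z => aF N η ξ (z + c)) N (∏ n, Complex.exp (c - ξ n + η / 2) / 2) := by
  have h := Lead.prod Finset.univ fun n (_ : n ∈ (Finset.univ : Finset (Fin N))) =>
    Lead.sinh_pos one_pos (c - ξ n + η / 2)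
  have e : (fun z => aF N η ξ (z + c)) = fun z =>
      ∏ n, Complex.sinh (((1 : ℤ) : ℂ) * z + (c - ξ n + η / 2)) := by
    funext z; unfold aF
    refine Finset.prod_congr rfl fun n _ => ?_
    rw [show z + c - ξ n + η / 2 = ((1 : ℤ) : ℂ) * z + (c - ξ n + η / 2) by push_cast; ring]
  rw [e]
  exact h.congr_coeff (by simp) rfl

lemma lead_aF_neg (N : ℕ) (η : ℂ) (ξ : Fin N → ℂ) (c : ℂ) :
    Lead (fun z => aF N η ξ (-z + c)) N (∏ n, -(Complex.exp (-(c - ξ n + η / 2)) / 2)) := by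
  have h := Lead.prod Finset.univ fun n (_ : n ∈ (Finset.univ : Finset (Fin N))) =>
    Lead.sinh_neg one_pos (c - ξ n + η / 2)
  have e : (fun z => aF N η ξ (-z + c)) = fun z =>
      ∏ n, Complex.sinh (-(((1 : ℤ) : ℂ) * z) + (c - ξ n + η / 2)) := by
    funext z; unfold aF
    refine Finset.prod_congr rfl fun n _ => ?_
    rw [show -z + c - ξ n + η / 2 = -(((1 : ℤ) : ℂ) * z) + (c - ξ n + η / 2) by
      push_cast; ring]
  rw [e]
  exact h.congr_coeff (by simp) rfl

lemma lead_sinh_ratio (η : ℂ) :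
    Lead (fun z => Complex.sinh (2 * z + η) / Complex.sinh (2 * z)) 0 (Complex.exp η) := by
  have h := (Lead.sinh_pos two_pos η).div (Lead.sinh_pos two_pos 0) (by simp)
  simpa using h

/-- The factors `exp(∓ξ_n)` coming from `a(λ)` and `d(-λ)` cancel. -/
lemma prod_coeff (N : ℕ) (η : ℂ) (ξ : Fin N → ℂ) :
    (∏ n, Complex.exp (0 - ξ n + η / 2) / 2) *
      (∏ n, -(Complex.exp (-(-η - ξ n + η / 2)) / 2)) =
      (-1) ^ N * (Complex.exp (N * η) / 4 ^ N) := by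
  rw [← Finset.prod_mul_distrib, Complex.exp_nat_mul, ← div_pow, ← mul_pow]
  rw [Finset.prod_congr rfl (g := fun _ => -1 * (Complex.exp η / 4))]
  · simp
  · intro n _
    rw [show η = (0 - ξ n + η / 2) + -(-η - ξ n + η / 2) by ring]
    conv_rhs => rw [Complex.exp_add]
    ring_nf

/-- The counterpart of `prod_coeff` for `a(-λ)` and `d(λ)`. -/
lemma prod_coeff_neg (N : ℕ) (η : ℂ) (ξ : Fin N → ℂ) :
    (∏ n, -(Complex.exp (-(0 - ξ n + η / 2)) / 2)) *
      (∏ n, Complex.exp (-η - ξ n + η / 2) / 2) =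
      (-1) ^ N * (Complex.exp (N * -η) / 4 ^ N) := by
  rw [← Finset.prod_mul_distrib, Complex.exp_nat_mul, ← div_pow, ← mul_pow]
  rw [Finset.prod_congr rfl (g := fun _ => -1 * (Complex.exp (-η) / 4))]
  · simp
  · intro n _
    have e : Complex.exp (-η) =
        Complex.exp (-(0 - ξ n + η / 2)) * Complex.exp (-η - ξ n + η / 2) := by
      rw [← Complex.exp_add]; ring_nf
    rw [e]; ring

lemma lead_AF (N : ℕ) (η : ℂ) (ξ : Fin N → ℂ) (αp βp αm βm : ℂ) :
    Lead (AF N η ξ αp βp αm βm) (2 * N + 4)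
      (Complex.exp (αp + αm - βp + βm + (N - 1) * η) /
        (16 * 4 ^ N * (Complex.sinh αp * Complex.cosh βp) *
          (Complex.sinh αm * Complex.cosh βm))) := by
  have h := (((((Lead.const ((-1 : ℂ) ^ N)).mul (lead_sinh_ratio η)).mul
    (lead_gPlus η αp βp)).mul (lead_gPlus η αm (-βm))).mul (lead_aF N η ξ 0)).mul
    (lead_aF_neg N η ξ (-η))
  have e : AF N η ξ αp βp αm βm = fun z =>
      (-1 : ℂ) ^ N * (Complex.sinh (2 * z + η) / Complex.sinh (2 * z)) *
        gPlus η αp βp z * gPlus η αm (-βm) z * aF N η ξ (z + 0) * aF N η ξ (-z + -η) := by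
    funext z; unfold AF dF
    rw [gMinus_eq, sub_eq_add_neg (-z) η, add_zero]
  rw [e]
  refine h.congr_coeff (by ring) ?_
  rw [mul_assoc, prod_coeff]
  have s : ((-1 : ℂ) ^ N) * (-1) ^ N = 1 := by rw [← mul_pow]; simp
  rw [show αp + αm - βp + βm + ((N : ℂ) - 1) * η =
    η + (αp - βp - η) + (αm - -βm - η) + N * η by ring, Complex.exp_add, Complex.exp_add,
    Complex.exp_add, Complex.cosh_neg]
  linear_combination (Complex.exp η * Complex.exp (αp - βp - η) * Complex.exp (αm - -βm - η) *
    Complex.exp (N * η) / (16 * 4 ^ N * (Complex.sinh αp * Complex.cosh βp) *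
          (Complex.sinh αm * Complex.cosh βm))) * s

lemma lead_AF_neg (N : ℕ) (η : ℂ) (ξ : Fin N → ℂ) (αp βp αm βm : ℂ) :
    Lead (fun z => AF N η ξ αp βp αm βm (-z)) (2 * N + 4)
      (Complex.exp (-(αp + αm - βp + βm + (N - 1) * η)) /
        (16 * 4 ^ N * (Complex.sinh αp * Complex.cosh βp) *
          (Complex.sinh αm * Complex.cosh βm))) := by
  have h := (((((Lead.const ((-1 : ℂ) ^ N)).mul (lead_sinh_ratio (-η))).mul
    (lead_gPlus_neg η αp βp)).mul (lead_gPlus_neg η αm (-βm))).mul (lead_aF_neg N η ξ 0)).mul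
    (lead_aF N η ξ (-η))
  have e : (fun z => AF N η ξ αp βp αm βm (-z)) = fun z =>
      (-1 : ℂ) ^ N * (Complex.sinh (2 * z + -η) / Complex.sinh (2 * z)) *
        gPlus η αp βp (-z) * gPlus η αm (-βm) (-z) * aF N η ξ (-z + 0) * aF N η ξ (z + -η) := by
    funext z; unfold AF dF
    have e1 : Complex.sinh (2 * -z + η) = -Complex.sinh (2 * z + -η) := by
      rw [← Complex.sinh_neg]; ring_nf
    have e2 : Complex.sinh (2 * -z) = -Complex.sinh (2 * z) := by
      rw [← Complex.sinh_neg]; ring_nf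
    rw [gMinus_eq, e1, e2, neg_div_neg_eq, neg_neg, add_zero, sub_eq_add_neg z η]
  rw [e]
  refine h.congr_coeff (by ring) ?_
  rw [mul_assoc, prod_coeff_neg]
  have s : ((-1 : ℂ) ^ N) * (-1) ^ N = 1 := by rw [← mul_pow]; simp
  rw [show -(αp + αm - βp + βm + ((N : ℂ) - 1) * η) =
    -η + -(αp - βp - η) + -(αm - -βm - η) + N * -η by ring, Complex.exp_add, Complex.exp_add,
    Complex.exp_add, Complex.cosh_neg]
  linear_combination (Complex.exp (-η) * Complex.exp (-(αp - βp - η)) *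
    Complex.exp (-(αm - -βm - η)) *
    Complex.exp (N * -η) / (16 * 4 ^ N * (Complex.sinh αp * Complex.cosh βp) *
          (Complex.sinh αm * Complex.cosh βm))) * s

lemma lead_cosh_two : Lead (fun z => Complex.cosh (2 * z)) 2 (1 / 2) := by
  simpa using Lead.cosh_pos two_pos 0

lemma lead_cosh_two_sub (c : ℂ) : Lead (fun z => Complex.cosh (2 * z) - c) 2 (1 / 2) := by
  simpa using lead_cosh_two.sub ((Lead.const c).of_lt two_pos)

lemma lead_cosh_sq_sub (c : ℂ) : Lead (fun z => Complex.cosh (2 * z) ^ 2 - c) 4 (1 / 4) := by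
  have h := (lead_cosh_two.mul lead_cosh_two).sub ((Lead.const c).of_lt (m := 2 + 2) (by norm_num))
  simp only [← sq] at h
  exact h.congr_coeff (by norm_num) (by norm_num)

lemma lead_gA (N : ℕ) (η : ℂ) (ξ : Fin N → ℂ) (a : Fin N) :
    Lead (gA N η ξ a) (2 * N + 4) 0 := by
  have h := ((lead_cosh_sq_sub (Complex.cosh η ^ 2)).div_const
    (Complex.cosh (2 * zeta0 N η ξ a) ^ 2 - Complex.cosh η ^ 2)).mul
    (Lead.prod (Finset.univ.erase a) fun b _ =>
      (lead_cosh_two_sub (Complex.cosh (2 * zeta0 N η ξ b))).div_const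
        (Complex.cosh (2 * zeta0 N η ξ a) - Complex.cosh (2 * zeta0 N η ξ b)))
  refine Lead.of_lt h ?_
  have : (Finset.univ.erase a).card < N := by
    simpa using Finset.card_erase_lt_of_mem (Finset.mem_univ a)
  lia

lemma lead_fF (N : ℕ) (η : ℂ) (ξ : Fin N → ℂ) (ζp ζm κp κm τp τm αp βp αm βm : ℂ) :
    Lead (fF N η ξ ζp ζm κp κm τp τm αp βp αm βm) (2 * N + 4)
      (κp * κm * Complex.cosh (τp - τm) / (Complex.sinh ζp * Complex.sinh ζm) /
        (2 * 4 ^ N)) := by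
  have hp : Lead (fun z => Complex.cosh (2 * z) + Complex.cosh η) 2 (1 / 2) := by
    simpa using lead_cosh_two_sub (-Complex.cosh η)
  have h1 := ((hp.div_const (2 * Complex.cosh η)).mul
    (Lead.prod Finset.univ fun b _ =>
      (lead_cosh_two_sub (Complex.cosh (2 * zeta0 N η ξ b))).div_const
        (Complex.cosh η - Complex.cosh (2 * zeta0 N η ξ b)))).mul
    (Lead.const (AF N η ξ αp βp αm βm (η / 2)))
  have h2 := (((Lead.const ((-1 : ℂ) ^ N)).mul
    ((lead_cosh_two_sub (Complex.cosh η)).div_const (2 * Complex.cosh η))).mul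
    (Lead.prod Finset.univ fun b _ =>
      (lead_cosh_two_sub (Complex.cosh (2 * zeta0 N η ξ b))).div_const
        (Complex.cosh η + Complex.cosh (2 * zeta0 N η ξ b)))).mul
    (Lead.const (AF N η ξ αp βp αm βm (η / 2 + Real.pi * Complex.I / 2)))
  have h3 := ((Lead.const ((2 : ℂ) ^ ((1 : ℤ) - (N : ℤ)) *
      (κp * κm * Complex.cosh (τp - τm) / (Complex.sinh ζp * Complex.sinh ζm)))).mul
    (lead_cosh_sq_sub (Complex.cosh η ^ 2))).mul
    (Lead.prod Finset.univ fun b _ =>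
      lead_cosh_two_sub (Complex.cosh (2 * zeta0 N η ξ b)))
  have h1' := h1.of_lt (m := 2 * N + 4) (by simp; lia)
  have h2' := h2.of_lt (m := 2 * N + 4) (by simp; lia)
  have h3' := h3.congr_coeff (n := 2 * N + 4)
    (d := κp * κm * Complex.cosh (τp - τm) / (Complex.sinh ζp * Complex.sinh ζm) /
        (2 * 4 ^ N)) (by simp; ring) (by
      rw [zpow_sub₀ two_ne_zero, zpow_one, zpow_natCast]
      simp only [Finset.prod_const, Finset.card_univ, Fintype.card_fin]
      rw [show (4 : ℂ) = 2 * 2 by norm_num, mul_pow, one_div, one_div, inv_pow]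
      have : (2 : ℂ) ^ N ≠ 0 := pow_ne_zero _ two_ne_zero
      field_simp)
  exact ((h1'.sub h2').add h3').congr_coeff rfl (by ring)

/-- A Laurent polynomial in `exp λ` with no exponent above `R`, shifted by `c`. -/
lemma lead_laurent (S : Finset ℤ) (y : ℤ → ℂ) (R : ℤ) (hR : R ∈ S)
    (hmax : ∀ a ∈ S, R < a → y a = 0) (c : ℂ) :
    Lead (fun z => ∑ a ∈ S, y a * Complex.exp ((a : ℂ) * (z + c))) R
      (y R * Complex.exp (R * c)) := by
  have h := Lead.sum (n := R) S (F := fun a z => y a * Complex.exp ((a : ℂ) * (z + c)))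
    (C := fun a => if a = R then y R * Complex.exp (R * c) else 0) fun a ha => by
      have h0 : Lead (fun z => y a * Complex.exp ((a : ℂ) * (z + c))) a
          (y a * Complex.exp (a * c)) := by
        simpa [mul_add] using (Lead.const (y a)).mul (Lead.exp_int a (a * c))
      rcases lt_trichotomy a R with hlt | rfl | hgt
      · rw [if_neg hlt.ne]; exact h0.of_lt hlt
      · simpa using h0
      · rw [if_neg hgt.ne']
        simp [hmax a ha hgt, Lead]
  simpa [hR] using h

/-- Lemma 3.2 / `impossible_hom`: under the stated boundary conditions, the
homogeneous Baxter equation has no nonzero Laurent-polynomial (in `e^λ`) solution `Q` for any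
`τ` in the SOV spectrum. -/
theorem statement5
    (N : ℕ) (hN : 1 ≤ N) (η : ℂ) (ξ : Fin N → ℂ)
    (ζp ζm κp κm τp τm αp αm βp βm : ℂ)
    (hκp : κp ≠ 0) (hκm : κm ≠ 0)
    (hζp : Complex.sinh ζp ≠ 0) (hζm : Complex.sinh ζm ≠ 0)
    (hαβp : Complex.sinh αp * Complex.cosh βp ≠ 0)
    (hαβm : Complex.sinh αm * Complex.cosh βm ≠ 0)
    (hrelp1 : Complex.sinh αp * Complex.cosh βp = Complex.sinh ζp / (2 * κp))
    (hrelp2 : Complex.cosh αp * Complex.sinh βp = Complex.cosh ζp / (2 * κp))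
    (hrelm1 : Complex.sinh αm * Complex.cosh βm = Complex.sinh ζm / (2 * κm))
    (hrelm2 : Complex.cosh αm * Complex.sinh βm = Complex.cosh ζm / (2 * κm))
    (hζ1 : ∀ a : Fin N, Complex.cosh (2 * zeta0 N η ξ a) ^ 2 ≠ Complex.cosh η ^ 2)
    (hζ2 : ∀ a b : Fin N, a ≠ b →
      Complex.cosh (2 * zeta0 N η ξ a) ≠ Complex.cosh (2 * zeta0 N η ξ b))
    (hY : ∀ i : Fin 2, ∀ r : ℤ, ∀ k : ℤ,
      YF N η τp τm αp βp αm βm (i : ℕ) r ≠ 2 * Real.pi * Complex.I * k)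
    (τfun : ℂ → ℂ) (hτ : τfun ∈ SigmaT N η ξ ζp ζm κp κm τp τm αp βp αm βm) :
    ¬ ∃ (s r : ℕ) (y : ℤ → ℂ) (Q : ℂ → ℂ),
        (∀ z : ℂ, Q z = ∑ a ∈ Finset.Icc (-(s : ℤ)) (r : ℤ), y a * Complex.exp ((a : ℂ) * z)) ∧
        (∃ z : ℂ, Q z ≠ 0) ∧
        (∀ z : ℂ, Complex.sinh (2 * z) ≠ 0 →
          τfun z * Q z = AF N η ξ αp βp αm βm z * Q (z - η) +
            AF N η ξ αp βp αm βm (-z) * Q (z + η)) := by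
  rintro ⟨s, r, y, Q, hQ, ⟨z₀, hz₀⟩, hB⟩
  obtain ⟨x, -, rfl⟩ := hτ
  set S := Finset.Icc (-(s : ℤ)) (r : ℤ) with hS
  have hne : (S.filter fun a => y a ≠ 0).Nonempty := by
    by_contra hcon
    rw [Finset.not_nonempty_iff_eq_empty, Finset.filter_eq_empty_iff] at hcon
    refine hz₀ ((hQ z₀).trans (Finset.sum_eq_zero fun a ha => ?_))
    rw [not_not.1 (hcon ha), zero_mul]
  obtain ⟨R, hRmem, hRmax⟩ := Finset.exists_max_image _ id hne
  rw [Finset.mem_filter] at hRmem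
  obtain ⟨hRS, hyR⟩ := hRmem
  have hmax : ∀ a ∈ S, R < a → y a = 0 := fun a ha hlt => by
    by_contra hya
    exact absurd (hRmax a (Finset.mem_filter.2 ⟨ha, hya⟩)) (not_le.2 hlt)
  have hQc : ∀ c : ℂ, Lead (fun z => Q (z + c)) R (y R * Complex.exp (R * c)) := fun c => by
    simpa only [hQ] using lead_laurent S y R hRS hmax c
  have hL : Lead (fun z => (fF N η ξ ζp ζm κp κm τp τm αp βp αm βm z +
      ∑ a : Fin N, gA N η ξ a z * x a) * Q z) (2 * N + 4 + R)
      (κp * κm * Complex.cosh (τp - τm) / (Complex.sinh ζp * Complex.sinh ζm) /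
        (2 * 4 ^ N) * y R) := by
    have hs := Lead.sum (n := 2 * N + 4) Finset.univ (F := fun a z => gA N η ξ a z * x a)
      (C := fun _ => 0) fun a _ => by
        simpa using (lead_gA N η ξ a).mul (Lead.const (x a))
    have h := ((lead_fF N η ξ ζp ζm κp κm τp τm αp βp αm βm).add hs).mul (hQc 0)
    simpa using h
  have hR := ((lead_AF N η ξ αp βp αm βm).mul (hQc (-η))).add
    ((lead_AF_neg N η ξ αp βp αm βm).mul (hQc η))
  have key := hL.unique hR (fun z hz => by simpa [sub_eq_add_neg] using hB z hz)
  -- After cancelling common factors, `key` is an equality of two values of `cosh`.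
  have hcosh : Complex.cosh (τp - τm) =
      Complex.cosh (αp + αm - βp + βm + (N - 1) * η - R * η) := by
    rw [hrelp1, hrelm1] at key
    have e1 : Complex.exp (αp + αm - βp + βm + (N - 1) * η - R * η) =
        Complex.exp (αp + αm - βp + βm + (N - 1) * η) * Complex.exp (R * -η) := by
      rw [← Complex.exp_add]; ring_nf
    have e2 : Complex.exp (-(αp + αm - βp + βm + (N - 1) * η - R * η)) =
        Complex.exp (-(αp + αm - βp + βm + (N - 1) * η)) * Complex.exp (R * η) := by
      rw [← Complex.exp_add]; ring_nf
    rw [Complex.cosh.eq_1 (αp + αm - βp + βm + (N - 1) * η - R * η), e1, e2]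
    generalize Complex.exp (αp + αm - βp + βm + (N - 1) * η) = E1 at *
    generalize Complex.exp (-(αp + αm - βp + βm + (N - 1) * η)) = E2 at *
    generalize Complex.exp (R * -η) = E3 at *
    have h4 : (4 : ℂ) ^ N ≠ 0 := pow_ne_zero _ (by norm_num)
    field_simp at key
    linear_combination key / 16
  rw [← Complex.cos_mul_I, ← Complex.cos_mul_I, Complex.cos_eq_cos_iff] at hcosh
  obtain ⟨k, hk | hk⟩ := hcosh
  · apply hY 0 R (-k)
    simp only [YF, Fin.val_zero, pow_zero]
    push_cast
    linear_combination (-Complex.I) * hk + (-(αp + αm - βp + βm + (N - 1) * η - R * η) +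
      (τp - τm)) * (-1 : ℂ) * Complex.I_sq
  · apply hY 1 R k
    simp only [YF, Fin.val_one, pow_one]
    linear_combination Complex.I * hk + (-(αp + αm - βp + βm + (N - 1) * η - R * η) -
      (τp - τm)) * Complex.I_sq

end XXZ
end
end

section
/- The transfer matrix is an even function of the spectral parameter: T(−λ) = T(λ) for all λ ∈ ℂ (both sides being well-defined entire matrix-valued functions of λ). -/
/-!
Write an operator on auxiliary ⊗ quantum space as a `2 × 2` matrix of operators on the quantum space
(`blk`). Then `M̂(z) = (-1)^N adj (M(-z))` with `adj` the formal adjugate, and `T(z)` is, up to the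
sign `(-1)^N`, the trace of `K₊(z) U(z)` with `U(z) = M(z) K₋(z) adj (M(-z))` (`Tmat_eq`).

The point is that `U` satisfies a linear relation `sinh (2z - η) • U(-z) = Λ_z (U(z))` with an
explicit linear map `Λ_z` (`Lam`) independent of the boundary parameters and of the chain. It holds
for `K₋` by the addition formulas (`Kminus_neg`), and it survives dressing by one more site because
`L(-z) Λ_z(X) adj (L(z)) = Λ_z (L(z) X adj (L(-z)))` whenever the entries of `X` commute with the
operators of that site (`dress`, a consequence of the Yang–Baxter equation, checked here entrywise);
`dbl_neg` is the resulting induction on the sites. Dually, `tr (K₊(-z) Λ_z(V))` equals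
`sinh (2z - η) • tr (K₊(z) V)` (`trace_Kplus`). Together these give
`sinh (2z - η) • T(-z) = sinh (2z - η) • T(z)` (`Tmat_even_mul`), and the scalar factor
is removed by continuity of `T`, since the zeros of `sinh (2z - η)` are isolated.
-/

open Complex Finset

noncomputable section

namespace XXZ

/-- the index type of the quantum space `(ℂ²)^{⊗N}` together with the auxiliary space -/
abbrev FullIdx (N : ℕ) := Fin 2 × (Fin N → Fin 2)

/-- the trigonometric 6-vertex `R`-matrix -/
def Rmat (η : ℂ) (z : ℂ) : Matrix (Fin 2 × Fin 2) (Fin 2 × Fin 2) ℂ :=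
  fun p q =>
    if p = q then (if p.1 = p.2 then Complex.sinh (z + η) else Complex.sinh z)
    else if p.1 = q.2 ∧ p.2 = q.1 then Complex.sinh η else 0

/-- the Pauli matrix `σʸ` -/
def sigmaY : Matrix (Fin 2) (Fin 2) ℂ := !![0, -Complex.I; Complex.I, 0]

/-- the Pauli matrix `σᶻ` -/
def sigmaZ : Matrix (Fin 2) (Fin 2) ℂ := !![1, 0; 0, -1]

/-- a `2×2` matrix acting on the auxiliary space (factor `0`) -/
def auxOp (N : ℕ) (K : Matrix (Fin 2) (Fin 2) ℂ) :
    Matrix (FullIdx N) (FullIdx N) ℂ :=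
  fun p q => K p.1 q.1 * (if p.2 = q.2 then 1 else 0)

/-- `R_{0n}(z)`: the `R`-matrix acting on the auxiliary space and the `n`-th site -/
def R0n (N : ℕ) (η : ℂ) (n : Fin N) (z : ℂ) :
    Matrix (FullIdx N) (FullIdx N) ℂ :=
  fun p q =>
    Rmat η z (p.1, p.2 n) (q.1, q.2 n) *
      (if ∀ m : Fin N, m ≠ n → p.2 m = q.2 m then 1 else 0)

/-- the bulk monodromy matrix `M(λ) = R_{0N}(λ-ξ_N-η/2) ⋯ R_{01}(λ-ξ_1-η/2)` -/
def Mmono (N : ℕ) (η : ℂ) (ξ : Fin N → ℂ) (z : ℂ) :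
    Matrix (FullIdx N) (FullIdx N) ℂ :=
  (List.ofFn fun k : Fin N => R0n N η k.rev (z - ξ k.rev - η / 2)).prod

/-- partial transposition in the auxiliary space (factor `0`) -/
def pt0 (N : ℕ) (A : Matrix (FullIdx N) (FullIdx N) ℂ) :
    Matrix (FullIdx N) (FullIdx N) ℂ :=
  fun p q => A (q.1, p.2) (p.1, q.2)

/-- `M̂(λ) = (-1)^N σ⁰ʸ M(-λ)^{t₀} σ⁰ʸ` -/
def Mhat (N : ℕ) (η : ℂ) (ξ : Fin N → ℂ) (z : ℂ) :
    Matrix (FullIdx N) (FullIdx N) ℂ :=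
  ((-1 : ℂ) ^ N) • (auxOp N sigmaY * pt0 N (Mmono N η ξ (-z)) * auxOp N sigmaY)

/-- the general scalar solution `K(λ; ζ, κ, τ)` of the reflection equation -/
def Kmat (η : ℂ) (z ζ κ τ : ℂ) : Matrix (Fin 2) (Fin 2) ℂ :=
  (1 / Complex.sinh ζ) •
    !![Complex.sinh (z - η / 2 + ζ), κ * Complex.exp τ * Complex.sinh (2 * z - η);
      κ * Complex.exp (-τ) * Complex.sinh (2 * z - η), Complex.sinh (ζ - z + η / 2)]

/-- `K₋(λ) = K(λ; ζ₋, κ₋, τ₋)` -/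
def Kminus (η ζm κm τm : ℂ) (z : ℂ) : Matrix (Fin 2) (Fin 2) ℂ := Kmat η z ζm κm τm

/-- `K₊(λ) = K(λ+η; ζ₊, κ₊, τ₊)` -/
def Kplus (η ζp κp τp : ℂ) (z : ℂ) : Matrix (Fin 2) (Fin 2) ℂ := Kmat η (z + η) ζp κp τp

/-- partial trace over the auxiliary space -/
def tr0 (N : ℕ) (A : Matrix (FullIdx N) (FullIdx N) ℂ) :
    Matrix (Fin N → Fin 2) (Fin N → Fin 2) ℂ :=
  fun s t => ∑ i : Fin 2, A (i, s) (i, t)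

/-- the transfer matrix `T(λ) = tr₀{K₊(λ) M(λ) K₋(λ) M̂(λ)}` -/
def Tmat (N : ℕ) (η : ℂ) (ξ : Fin N → ℂ) (ζp ζm κp κm τp τm : ℂ) (z : ℂ) :
    Matrix (Fin N → Fin 2) (Fin N → Fin 2) ℂ :=
  tr0 N (auxOp N (Kplus η ζp κp τp z) * Mmono N η ξ z *
    auxOp N (Kminus η ζm κm τm z) * Mhat N η ξ z)

/-! ### Dressing by one site -/

/-- The formal adjugate of a `2 × 2` matrix over a (noncommutative) ring. It equals `σʸ Xᵗ σʸ`, where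
the transposition permutes the entries of `X` without touching them. -/
def adj {Q : Type*} [Ring Q] (X : Matrix (Fin 2) (Fin 2) Q) : Matrix (Fin 2) (Fin 2) Q :=
  !![X 1 1, -X 0 1; -X 1 0, X 0 0]

/-- The linear map `Λ_z` on `2 × 2` matrices which sends `U(z)` to `sinh (2z - η) • U(-z)` whenever
`U` is `K₋` or a double-row monodromy matrix built on it. -/
def Lam {Q : Type*} [Ring Q] [Algebra ℂ Q] (η z : ℂ) (X : Matrix (Fin 2) (Fin 2) Q) :
    Matrix (Fin 2) (Fin 2) Q :=
  !![sinh (2 * z) • X 1 1 - sinh η • X 0 0, -sinh (2 * z + η) • X 0 1;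
    -sinh (2 * z + η) • X 1 0, sinh (2 * z) • X 0 0 - sinh η • X 1 1]

/-- The Lax matrix: `R(u)` as a `2 × 2` matrix in the auxiliary space, with entries in the algebra
generated by the matrix units `e a b` of a single site. -/
def Lax {Q : Type*} [Ring Q] [Algebra ℂ Q] (e : Fin 2 → Fin 2 → Q) (η u : ℂ) :
    Matrix (Fin 2) (Fin 2) Q :=
  !![sinh (u + η) • e 0 0 + sinh u • e 1 1, sinh η • e 1 0;
    sinh η • e 0 1, sinh u • e 0 0 + sinh (u + η) • e 1 1]

/-- The formal adjugate reverses a product as soon as the entries of the two factors commute with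
each other; the entries of one factor need not commute among themselves. -/
theorem adj_mul {Q : Type*} [Ring Q] (X Y : Matrix (Fin 2) (Fin 2) Q)
    (h : ∀ i j k l, Commute (X i j) (Y k l)) : adj (X * Y) = adj Y * adj X := by
  ext i j
  fin_cases i <;> fin_cases j <;>
    simp [adj, Matrix.mul_apply, Fin.sum_univ_two, (h _ _ _ _).eq] <;> abel

/-- `Λ_z` is compatible with dressing by one site. The entries of `X` commute with the site, so both
sides expand in the products `e a b * X i j`; the coefficients agree by identities between
Laurent polynomials in `exp (η / 2)`, `exp z` and `exp ξ`. -/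
theorem dress {Q : Type*} [Ring Q] [Algebra ℂ Q] (e : Fin 2 → Fin 2 → Q)
    (he : ∀ a b c d, e a b * e c d = if b = c then e a d else 0)
    (X : Matrix (Fin 2) (Fin 2) Q) (hX : ∀ a b i j, Commute (e a b) (X i j))
    (η ξ z : ℂ) :
    Lax e η (-z - ξ - η / 2) * Lam η z X * adj (Lax e η (z - ξ - η / 2)) =
      Lam η z (Lax e η (z - ξ - η / 2) * X * adj (Lax e η (-z - ξ - η / 2))) := by
  have h1 : ∀ a b i j, X i j * e a b = e a b * X i j := fun a b i j => (hX a b i j).eq.symm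
  have h2 : ∀ a b c d (Y : Q), e a b * (e c d * Y) = if b = c then e a d * Y else 0 := by
    intro a b c d Y
    rw [← mul_assoc, he]; split_ifs <;> simp
  -- Moving every `X i j` to the right leaves products `e a b * X i j`. The coefficients are rewritten
  -- as rational functions of three exponentials, so that `ring` can compare them.
  obtain ⟨x, hx⟩ : ∃ x, x = Complex.exp (η / 2) := ⟨_, rfl⟩
  obtain ⟨y, hy⟩ : ∃ x, x = Complex.exp z := ⟨_, rfl⟩
  obtain ⟨w, hw⟩ : ∃ x, x = Complex.exp ξ := ⟨_, rfl⟩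
  have hx0 : x ≠ 0 := hx ▸ Complex.exp_ne_zero _
  have hy0 : y ≠ 0 := hy ▸ Complex.exp_ne_zero _
  have hw0 : w ≠ 0 := hw ▸ Complex.exp_ne_zero _
  have s1 : sinh η = (x ^ 2 - (x ^ 2)⁻¹) / 2 := by
    rw [hx, ← Complex.exp_nat_mul, ← Complex.exp_neg, Complex.sinh]; congr 4 <;> push_cast <;> ring
  have s2 : sinh (2 * z) = (y ^ 2 - (y ^ 2)⁻¹) / 2 := by
    rw [hy, ← Complex.exp_nat_mul, ← Complex.exp_neg, Complex.sinh]; push_cast; rfl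
  have s3 : sinh (2 * z + η) = (y ^ 2 * x ^ 2 - (y ^ 2 * x ^ 2)⁻¹) / 2 := by
    rw [hy, hx, ← Complex.exp_nat_mul, ← Complex.exp_nat_mul, ← Complex.exp_add,
      ← Complex.exp_neg, Complex.sinh]
    congr 4 <;> push_cast <;> ring
  have s4 : sinh (z - ξ - η / 2) = (y / w / x - (y / w / x)⁻¹) / 2 := by
    rw [hy, hx, hw, ← Complex.exp_sub, ← Complex.exp_sub, ← Complex.exp_neg,
      Complex.sinh]
  have s5 : sinh (z - ξ - η / 2 + η) = (y / w * x - (y / w * x)⁻¹) / 2 := by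
    rw [hy, hx, hw, ← Complex.exp_sub, ← Complex.exp_add, ← Complex.exp_neg, Complex.sinh]
    ring_nf
  have s6 : sinh (-z - ξ - η / 2) = (y⁻¹ / w / x - (y⁻¹ / w / x)⁻¹) / 2 := by
    rw [hy, hx, hw, ← Complex.exp_neg, ← Complex.exp_sub, ← Complex.exp_sub, ← Complex.exp_neg,
      Complex.sinh]
  have s7 : sinh (-z - ξ - η / 2 + η) = (y⁻¹ / w * x - (y⁻¹ / w * x)⁻¹) / 2 := by
    rw [hy, hx, hw, ← Complex.exp_neg z, ← Complex.exp_sub, ← Complex.exp_add,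
      ← Complex.exp_neg, Complex.sinh]
    ring_nf
  ext i j
  fin_cases i <;> fin_cases j <;>
    simp [-Matrix.cons_mul, Lax, adj, Lam, Matrix.mul_apply, Fin.sum_univ_two, mul_add, add_mul,
      mul_sub, sub_mul, mul_assoc, h1, h2] <;>
    simp only [s1, s2, s3, s4, s5, s6, s7] <;>
    match_scalars <;> field_simp <;> ring

/-! ### The double-row monodromy matrix -/

theorem comm_mul {Q : Type*} [Ring Q] {x : Q} {X Y : Matrix (Fin 2) (Fin 2) Q}
    (hX : ∀ i j, Commute x (X i j)) (hY : ∀ i j, Commute x (Y i j)) (i j : Fin 2) :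
    Commute x ((X * Y) i j) := by
  rw [Matrix.mul_apply]
  exact Commute.sum_right _ _ _ fun k _ => (hX i k).mul_right (hY k j)

theorem comm_adj {Q : Type*} [Ring Q] {x : Q} {X : Matrix (Fin 2) (Fin 2) Q}
    (hX : ∀ i j, Commute x (X i j)) (i j : Fin 2) : Commute x (adj X i j) := by
  fin_cases i <;> fin_cases j <;> simp [adj, hX]

theorem comm_Lax {Q : Type*} [Ring Q] [Algebra ℂ Q] {x : Q} {e : Fin 2 → Fin 2 → Q}
    (he : ∀ a b, Commute x (e a b)) (η u : ℂ) (i j : Fin 2) : Commute x (Lax e η u i j) := by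
  have h (c : ℂ) (a b : Fin 2) : Commute x (c • e a b) := (he a b).smul_right c
  fin_cases i <;> fin_cases j <;> simp [Lax, h, Commute.add_right]

/-- The ordered product of the Lax matrices of the sites in `l`: the bulk monodromy matrix of the
chain `l`. -/
def mono {ι Q : Type*} [Ring Q] [Algebra ℂ Q] (e : ι → Fin 2 → Fin 2 → Q) (η : ℂ) (ξ : ι → ℂ)
    (l : List ι) (z : ℂ) : Matrix (Fin 2) (Fin 2) Q :=
  (l.map fun n => Lax (e n) η (z - ξ n - η / 2)).prod

/-- The double-row monodromy matrix `M(z) K(z) M̂(z)` of the chain `l`, without the sign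
`(-1) ^ l.length` carried by `M̂`. -/
def dbl {ι Q : Type*} [Ring Q] [Algebra ℂ Q] (e : ι → Fin 2 → Fin 2 → Q) (η : ℂ) (ξ : ι → ℂ)
    (K : ℂ → Matrix (Fin 2) (Fin 2) Q) (l : List ι) (z : ℂ) : Matrix (Fin 2) (Fin 2) Q :=
  mono e η ξ l z * K z * adj (mono e η ξ l (-z))

theorem comm_mono {ι Q : Type*} [Ring Q] [Algebra ℂ Q] {e : ι → Fin 2 → Fin 2 → Q} {x : Q}
    {l : List ι} (hx : ∀ n ∈ l, ∀ a b, Commute x (e n a b)) (η : ℂ) (ξ : ι → ℂ) (z : ℂ)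
    (i j : Fin 2) : Commute x (mono e η ξ l z i j) := by
  induction l generalizing i j with
  | nil => fin_cases i <;> fin_cases j <;> simp [mono]
  | cons n l ih =>
    have : mono e η ξ (n :: l) z = Lax (e n) η (z - ξ n - η / 2) * mono e η ξ l z := by simp [mono]
    rw [this]
    exact comm_mul (comm_Lax (hx n (by simp)) _ _)
      (ih fun m hm => hx m (List.mem_cons_of_mem _ hm)) i j

/-- The relation `sinh (2z - η) • U(-z) = Λ_z (U(z))` passes from `K` to the double-row monodromy
matrix, one site at a time. -/
theorem dbl_neg {ι Q : Type*} [Ring Q] [Algebra ℂ Q] (e : ι → Fin 2 → Fin 2 → Q)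
    (he : ∀ n a b c d, e n a b * e n c d = if b = c then e n a d else 0)
    (hc : ∀ n m, n ≠ m → ∀ a b c d, Commute (e n a b) (e m c d))
    (η : ℂ) (ξ : ι → ℂ) (K : ℂ → Matrix (Fin 2) (Fin 2) Q)
    (hK : ∀ x z i j, Commute x (K z i j))
    (z : ℂ) (hKz : sinh (2 * z - η) • K (-z) = Lam η z (K z)) (l : List ι) (hl : l.Nodup) :
    sinh (2 * z - η) • dbl e η ξ K l (-z) = Lam η z (dbl e η ξ K l z) := by
  induction l with
  | nil =>
    have h1 : adj (1 : Matrix (Fin 2) (Fin 2) Q) = 1 := by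
      ext i j; fin_cases i <;> fin_cases j <;> simp [adj]
    simpa [dbl, mono, h1] using hKz
  | cons n l ih =>
    obtain ⟨hn, hl⟩ := List.nodup_cons.1 hl
    have hne : ∀ m ∈ l, n ≠ m := fun m hm h => hn (h ▸ hm)
    have hmono (a b w i j) : Commute (e n a b) (mono e η ξ l w i j) :=
      comm_mono (fun m hm => hc n m (hne m hm) a b) η ξ w i j
    have hstep (w : ℂ) : dbl e η ξ K (n :: l) w = Lax (e n) η (w - ξ n - η / 2) *
        dbl e η ξ K l w * adj (Lax (e n) η (-w - ξ n - η / 2)) := by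
      have hcons (w : ℂ) :
          mono e η ξ (n :: l) w = Lax (e n) η (w - ξ n - η / 2) * mono e η ξ l w := by
        simp [mono]
      rw [dbl, hcons, hcons, adj_mul, dbl]
      · simp only [mul_assoc]
      · exact fun i j k m =>
          (comm_Lax (fun a b => (hmono a b (-w) k m).symm) η (-w - ξ n - η / 2) i j).symm
    have hd (a b i j) : Commute (e n a b) (dbl e η ξ K l z i j) :=
      comm_mul (comm_mul (hmono a b z) (hK _ z)) (comm_adj (hmono a b (-z))) i j
    rw [hstep, hstep, ← dress (e n) (he n) _ hd, ← ih hl]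
    simp

/-! ### The boundary matrices -/

theorem sinh_key (ζ η z : ℂ) :
    sinh (2 * z) * sinh (ζ + z - η / 2) - sinh η * sinh (ζ - z + η / 2) =
      sinh (2 * z - η) * sinh (ζ + z + η / 2) := by
  simp only [Complex.sinh]
  ring_nf
  simp only [← Complex.exp_add]
  ring_nf

theorem sinh_key' (ζ η z : ℂ) :
    sinh (2 * z) * sinh (ζ - z + η / 2) - sinh η * sinh (ζ + z - η / 2) =
      sinh (2 * z - η) * sinh (ζ - z - η / 2) := by
  simp only [Complex.sinh]
  ring_nf
  simp only [← Complex.exp_add]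
  ring_nf

theorem Kminus_neg {Q : Type*} [Ring Q] [Algebra ℂ Q] (η ζ κ τ z : ℂ) :
    sinh (2 * z - η) • (Kminus η ζ κ τ (-z)).map (algebraMap ℂ Q) =
      Lam η z ((Kminus η ζ κ τ z).map (algebraMap ℂ Q)) := by
  ext i j
  fin_cases i <;> fin_cases j <;>
    simp [Kminus, Kmat, Lam, Algebra.algebraMap_eq_smul_one] <;> match_scalars
  · rw [show -z - η / 2 + ζ = ζ - z - η / 2 by ring, show z - η / 2 + ζ = ζ + z - η / 2 by ring]
    linear_combination -(sinh ζ)⁻¹ * sinh_key' ζ η z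
  · rw [show -(2 * z) - η = -(2 * z + η) by ring, Complex.sinh_neg]
    ring
  · rw [show -(2 * z) - η = -(2 * z + η) by ring, Complex.sinh_neg]
    ring
  · rw [show z - η / 2 + ζ = ζ + z - η / 2 by ring]
    linear_combination -(sinh ζ)⁻¹ * sinh_key ζ η z

/-- The trace against `K₊` intertwines `Λ_z` with `z ↦ -z`, up to the factor `sinh (2z - η)`: in
effect, `K₊` satisfies the relation dual to the one satisfied by `K₋`. -/
theorem trace_Kplus {Q : Type*} [Ring Q] [Algebra ℂ Q] (η ζ κ τ z : ℂ)
    (V : Matrix (Fin 2) (Fin 2) Q) :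
    ((Kplus η ζ κ τ (-z)).map (algebraMap ℂ Q) * Lam η z V).trace =
      sinh (2 * z - η) • ((Kplus η ζ κ τ z).map (algebraMap ℂ Q) * V).trace := by
  simp [Kplus, Kmat, Lam, Algebra.algebraMap_eq_smul_one, Matrix.trace, Matrix.mul_apply,
    Fin.sum_univ_two]
  match_scalars
  · rw [show -z + η - η / 2 + ζ = ζ - z + η / 2 by ring,
      show ζ - (-z + η) + η / 2 = ζ + z - η / 2 by ring,
      show ζ - (z + η) + η / 2 = ζ - z - η / 2 by ring]
    linear_combination (sinh ζ)⁻¹ * sinh_key' ζ η z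
  · rw [show -z + η - η / 2 + ζ = ζ - z + η / 2 by ring,
      show ζ - (-z + η) + η / 2 = ζ + z - η / 2 by ring,
      show z + η - η / 2 + ζ = ζ + z + η / 2 by ring]
    linear_combination (sinh ζ)⁻¹ * sinh_key ζ η z
  · rw [show 2 * (-z + η) - η = -(2 * z - η) by ring, Complex.sinh_neg,
      show 2 * (z + η) - η = 2 * z + η by ring]
    ring
  · rw [show 2 * (-z + η) - η = -(2 * z - η) by ring, Complex.sinh_neg,
      show 2 * (z + η) - η = 2 * z + η by ring]
    ring

/-! ### Passing to blocks -/

/-- Operators on the quantum space `(ℂ²)^{⊗N}`. -/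
abbrev Qop (N : ℕ) := Matrix (Fin N → Fin 2) (Fin N → Fin 2) ℂ

/-- The matrix unit `E_{ab}` acting on the `n`-th site of the quantum space. -/
def site (N : ℕ) (n : Fin N) (a b : Fin 2) : Qop N :=
  fun s t => if s n = a ∧ t n = b ∧ ∀ m, m ≠ n → s m = t m then 1 else 0

theorem site_mul_apply (N : ℕ) (n : Fin N) (a b : Fin 2) (Y : Qop N) (s t : Fin N → Fin 2) :
    (site N n a b * Y) s t = if s n = a then Y (Function.update s n b) t else 0 := by
  rw [Matrix.mul_apply, Finset.sum_eq_single (Function.update s n b)]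
  · have : ∀ m, m ≠ n → s m = Function.update s n b m := fun m hm => by simp [hm]
    simp only [site, Function.update_self, and_iff_left this, and_true, ite_mul, one_mul, zero_mul]
  · intro r _ hr
    have : ¬ (s n = a ∧ r n = b ∧ ∀ m, m ≠ n → s m = r m) := by
      rintro ⟨-, h1, h2⟩
      refine hr (funext fun m => ?_)
      by_cases hm : m = n
      · subst hm; simpa using h1
      · simp [hm, h2 m hm]
    simp [site, this]
  · simp

theorem site_mul (N : ℕ) (n : Fin N) (a b c d : Fin 2) :
    site N n a b * site N n c d = if b = c then site N n a d else 0 := by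
  ext s t
  have h : (∀ m, m ≠ n → Function.update s n b m = t m) ↔ ∀ m, m ≠ n → s m = t m :=
    forall₂_congr fun m hm => by simp [hm]
  rw [site_mul_apply]
  simp only [site, h]
  by_cases hb : b = c <;> by_cases ha : s n = a <;>
    simp only [site, ha, hb, Function.update_self, true_and, false_and, if_true, if_false,
      Matrix.zero_apply]

theorem site_comm (N : ℕ) (n m : Fin N) (hnm : n ≠ m) (a b c d : Fin 2) :
    Commute (site N n a b) (site N m c d) := by
  ext s t
  -- A right factor `1` makes `site_mul_apply` applicable to both site operators of each product.
  rw [← mul_one (site N n a b * site N m c d), ← mul_one (site N m c d * site N n a b), mul_assoc,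
    mul_assoc]
  simp only [site_mul_apply]
  rw [Function.update_comm hnm]
  simp [Function.update_of_ne hnm, Function.update_of_ne hnm.symm]
  split_ifs <;> rfl

/-- Operators on auxiliary ⊗ quantum space, viewed as `2 × 2` matrices of operators on the quantum
space. -/
def blk (N : ℕ) : Matrix (FullIdx N) (FullIdx N) ℂ ≃+* Matrix (Fin 2) (Fin 2) (Qop N) :=
  (Matrix.compRingEquiv (Fin 2) (Fin N → Fin 2) ℂ).symm

theorem blk_apply (N : ℕ) (A : Matrix (FullIdx N) (FullIdx N) ℂ) (i j : Fin 2)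
    (s t : Fin N → Fin 2) : blk N A i j s t = A (i, s) (j, t) := rfl

theorem blk_R0n (N : ℕ) (η : ℂ) (n : Fin N) (u : ℂ) :
    blk N (R0n N η n u) = Lax (site N n) η u := by
  ext i j s t
  rw [blk_apply]
  by_cases h : ∀ m, m ≠ n → s m = t m
  · simp only [R0n, Rmat, if_pos h]
    have h01 (a : Fin 2) : a = 0 ∨ a = 1 := by omega
    have hsite (a b : Fin 2) : site N n a b s t = if s n = a ∧ t n = b then 1 else 0 := by
      simp only [site, and_iff_left h]
    rcases h01 (s n) with hs | hs <;> rcases h01 (t n) with ht | ht <;>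
      fin_cases i <;> fin_cases j <;> simp [Lax, hsite, hs, ht]
  · simp only [R0n, if_neg h]
    fin_cases i <;> fin_cases j <;> simp [Lax, site, h]

theorem blk_auxOp (N : ℕ) (K : Matrix (Fin 2) (Fin 2) ℂ) :
    blk N (auxOp N K) = K.map (algebraMap ℂ (Qop N)) := by
  ext i j s t
  simp [blk_apply, auxOp, Matrix.algebraMap_matrix_apply]

theorem blk_adj (N : ℕ) (A : Matrix (FullIdx N) (FullIdx N) ℂ) :
    blk N (auxOp N sigmaY * pt0 N A * auxOp N sigmaY) = adj (blk N A) := by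
  have h (i j : Fin 2) : blk N (pt0 N A) i j = blk N A j i := rfl
  rw [map_mul, map_mul, blk_auxOp]
  refine Matrix.ext fun i j => ?_
  fin_cases i <;> fin_cases j <;>
    simp only [Matrix.mul_apply, Fin.sum_univ_two, h, adj, sigmaY, Matrix.map_apply] <;>
    simp [Algebra.algebraMap_eq_smul_one, smul_smul]

theorem blk_Mmono (N : ℕ) (η : ℂ) (ξ : Fin N → ℂ) (z : ℂ) :
    blk N (Mmono N η ξ z) = mono (site N) η ξ (List.ofFn Fin.rev) z := by
  simp only [Mmono, mono, map_list_prod, List.map_ofFn]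
  congr 2
  funext k
  exact blk_R0n _ _ _ _

theorem Tmat_eq (N : ℕ) (η : ℂ) (ξ : Fin N → ℂ) (ζp ζm κp κm τp τm z : ℂ) :
    Tmat N η ξ ζp ζm κp κm τp τm z = (-1 : ℂ) ^ N •
      ((Kplus η ζp κp τp z).map (algebraMap ℂ (Qop N)) *
        dbl (site N) η ξ (fun w => (Kminus η ζm κm τm w).map (algebraMap ℂ (Qop N)))
          (List.ofFn Fin.rev) z).trace := by
  have htr (A : Matrix (FullIdx N) (FullIdx N) ℂ) : tr0 N A = (blk N A).trace := by
    ext s t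
    simp [tr0, Matrix.trace, blk_apply]
  have hs (c : ℂ) (A : Matrix (FullIdx N) (FullIdx N) ℂ) : blk N (c • A) = c • blk N A := rfl
  rw [Tmat, htr, Mhat, mul_smul_comm, hs, Matrix.trace_smul, map_mul, blk_adj]
  simp only [map_mul, blk_auxOp, blk_Mmono, dbl, mul_assoc]

/-! ### Evenness -/

theorem Tmat_even_mul (N : ℕ) (η : ℂ) (ξ : Fin N → ℂ) (ζp ζm κp κm τp τm z : ℂ) :
    sinh (2 * z - η) • Tmat N η ξ ζp ζm κp κm τp τm (-z) =
      sinh (2 * z - η) • Tmat N η ξ ζp ζm κp κm τp τm z := by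
  have h := dbl_neg (site N) (site_mul N) (site_comm N) η ξ
    (fun w => (Kminus η ζm κm τm w).map (algebraMap ℂ (Qop N)))
    (fun x w i j => (Algebra.commutes (Kminus η ζm κm τm w i j) x).symm) z (Kminus_neg η ζm κm τm z)
    (List.ofFn Fin.rev) (List.nodup_ofFn.2 Fin.rev_injective)
  rw [Tmat_eq, Tmat_eq, smul_comm, ← Matrix.trace_smul, ← mul_smul_comm]
  rw [h, trace_Kplus, smul_comm]

theorem continuous_Tmat (N : ℕ) (η : ℂ) (ξ : Fin N → ℂ) (ζp ζm κp κm τp τm : ℂ) :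
    Continuous fun z => Tmat N η ξ ζp ζm κp κm τp τm z := by
  have hM : Continuous fun z => Mmono N η ξ z := by
    simp only [Mmono, List.ofFn_eq_map]
    refine continuous_list_prod _ fun k _ => ?_
    refine continuous_matrix fun p q => ?_
    simp only [R0n, Rmat]
    split_ifs <;> fun_prop
  have hK (ζ κ τ : ℂ) : Continuous fun z => Kmat η z ζ κ τ := by
    refine continuous_matrix fun i j => ?_
    fin_cases i <;> fin_cases j <;> simp [Kmat] <;> fun_prop
  have hA {K : ℂ → Matrix (Fin 2) (Fin 2) ℂ} (h : Continuous K) :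
      Continuous fun z => auxOp N (K z) :=
    continuous_matrix fun p q => (h.matrix_elem _ _).mul continuous_const
  have hP : Continuous fun z => pt0 N (Mmono N η ξ (-z)) :=
    continuous_matrix fun p q => (hM.comp continuous_neg).matrix_elem _ _
  have hH : Continuous fun z => Mhat N η ξ z :=
    ((continuous_const.matrix_mul hP).matrix_mul continuous_const).const_smul ((-1 : ℂ) ^ N)
  have hKp : Continuous fun z => Kplus η ζp κp τp z :=
    (hK ζp κp τp).comp (continuous_id.add continuous_const)
  have hT := (((hA hKp).matrix_mul hM).matrix_mul (hA (hK ζm κm τm))).matrix_mul hH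
  exact continuous_matrix fun s t => continuous_finsetSum univ fun i _ =>
    hT.matrix_elem (i, s) (i, t)

/-- part of Proposition 2.1: the transfer matrix is an even function of the
spectral parameter. -/
theorem statement12
    (N : ℕ) (hN : 1 ≤ N) (η : ℂ) (ξ : Fin N → ℂ)
    (ζp ζm κp κm τp τm : ℂ)
    (hζp : Complex.sinh ζp ≠ 0) (hζm : Complex.sinh ζm ≠ 0) (z : ℂ) :
    Tmat N η ξ ζp ζm κp κm τp τm (-z) = Tmat N η ξ ζp ζm κp κm τp τm z := by
  have hT := continuous_Tmat N η ξ ζp ζm κp κm τp τm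
  have hne : ∀ᶠ w in nhdsWithin z {z}ᶜ, sinh (2 * w - η) ≠ 0 := by
    by_cases h0 : sinh (2 * z - η) = 0
    -- The zeros of `sinh` are simple, hence isolated.
    · have hd : HasDerivAt (fun w : ℂ => sinh (2 * w - η)) (cosh (2 * z - η) * (2 * 1)) z :=
        (((hasDerivAt_id z).const_mul 2).sub_const η).csinh
      refine hd.eventually_ne (c := 0) ?_
      have := Complex.cosh_sq_sub_sinh_sq (2 * z - η)
      intro hc
      have hc' : cosh (2 * z - η) = 0 := by simpa using hc
      simp [h0, hc'] at this
    · have hcont : Continuous fun w : ℂ => sinh (2 * w - η) := by fun_prop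
      exact (hcont.continuousAt.eventually_ne h0).filter_mono nhdsWithin_le_nhds
  have h1 := ((hT.comp continuous_neg).tendsto z).mono_left (nhdsWithin_le_nhds (s := {z}ᶜ))
  have h2 := (hT.tendsto z).mono_left (nhdsWithin_le_nhds (s := {z}ᶜ))
  refine tendsto_nhds_unique (h1.congr' ?_) h2
  filter_upwards [hne] with w hw
  exact smul_right_injective _ hw (Tmat_even_mul N η ξ ζp ζm κp κm τp τm w)

end XXZ
end
end

section
/- Write T(λ | τ₊, ζ₊, κ₊, τ₋, ζ₋, κ₋) for the transfer matrix to display its dependence on the boundary parameters, and set Γ_y = σ^y ⊗ σ^y ⊗ ⋯ ⊗ σ^y and Γ_z = σ^z ⊗ σ^z ⊗ ⋯ ⊗ σ^z (N factors) acting on (ℂ²)^{⊗N}. Then for all λ ∈ ℂ: T(λ | −τ₊, −ζ₊, κ₊, −τ₋, −ζ₋, κ₋) = Γ_y · T(λ | τ₊, ζ₊, κ₊, τ₋, ζ₋, κ₋) · Γ_y and T(λ | τ₊, ζ₊, −κ₊, τ₋, ζ₋, −κ₋) = Γ_z · T(λ | τ₊, ζ₊, κ₊, τ₋, ζ₋,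 κ₋) · Γ_z; in particular these transfer matrices are isospectral. -/
/-!
The matrices `σʸ` and `σᶻ` are monomial: each has the form `G i j = g i · [j = w i]` with `w` an
involution of `Fin 2` (the flip for `σʸ`, the identity for `σᶻ`), where `g²` is constant and
`g i · g (w i) = 1`. Hence `F = G₀ ⊗ G ⊗ ⋯ ⊗ G` is monomial too, and `F A = A' F` is an entrywise
relation between `A` and `A'` (`Intertwines`), stable under products. The bulk part of the transfer
matrix commutes with `F`: `G ⊗ G` commutes with the six-vertex `R`-matrix, so `F` commutes with
every `R₀ₙ`, with the monodromy matrix, with its partial transpose (as `Gᵗ = ±G`), and with `M̂`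
(as `G σʸ = ±σʸ G`, and `σʸ` occurs twice). Conjugating the boundary matrices by `G` gives exactly
the stated change of boundary parameters. Taking the partial trace turns `F A = A' F` into
`Γ (tr₀ A) = (tr₀ A') Γ`, and `Γ² = 1`.
-/

open Complex Finset

noncomputable section

namespace XXZ

/-- `Γ_y = σʸ ⊗ ⋯ ⊗ σʸ` -/
def GammaY (N : ℕ) : Matrix (Fin N → Fin 2) (Fin N → Fin 2) ℂ :=
  fun s t => ∏ n : Fin N, sigmaY (s n) (t n)

/-- `Γ_z = σᶻ ⊗ ⋯ ⊗ σᶻ` -/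
def GammaZ (N : ℕ) : Matrix (Fin N → Fin 2) (Fin N → Fin 2) ℂ :=
  fun s t => ∏ n : Fin N, sigmaZ (s n) (t n)

section Monomial

variable {N : ℕ} (g : Fin 2 → ℂ) (w : Equiv.Perm (Fin 2))

/-- The weight `∏ₙ g (sₙ)` of a spin configuration: the nonzero entry in row `s` of the tensor
power of the monomial matrix `g i · [j = w i]`. -/
def weight (s : Fin N → Fin 2) : ℂ := ∏ n, g (s n)

/-- The relation `F A = A' F` written entrywise, where `F` is the tensor power, over the auxiliary
space and all sites, of the monomial matrix `g i · [j = w i]` (with `w` an involution). -/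
def Intertwines (A A' : Matrix (FullIdx N) (FullIdx N) ℂ) : Prop :=
  ∀ (i j : Fin 2) (s t : Fin N → Fin 2),
    g i * weight g s * A (w i, w ∘ s) (w j, w ∘ t) = g j * weight g t * A' (i, s) (j, t)

variable {g w}

/-- Relabelling the full index set by `w` on every factor. -/
def relabel (N : ℕ) (w : Equiv.Perm (Fin 2)) : Equiv.Perm (FullIdx N) :=
  Equiv.prodCongr w (Equiv.arrowCongr (Equiv.refl _) w)

lemma relabel_apply (i : Fin 2) (s : Fin N → Fin 2) : relabel N w (i, s) = (w i, w ∘ s) := rfl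

lemma Intertwines.mul {A A' B B' : Matrix (FullIdx N) (FullIdx N) ℂ}
    (hA : Intertwines g w A A') (hB : Intertwines g w B B') :
    Intertwines g w (A * B) (A' * B') := by
  intro i j s t
  rw [Matrix.mul_apply, Matrix.mul_apply, ← Equiv.sum_comp (relabel N w), mul_sum, mul_sum]
  refine sum_congr rfl fun ⟨k, u⟩ _ => ?_
  rw [relabel_apply, ← mul_assoc, hA, mul_right_comm, hB]
  ring

lemma Intertwines.smul {A A' : Matrix (FullIdx N) (FullIdx N) ℂ} (c : ℂ)
    (hA : Intertwines g w A A') : Intertwines g w (c • A) (c • A') := by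
  intro i j s t
  have h := hA i j s t
  simp only [Matrix.smul_apply, smul_eq_mul]
  linear_combination c * h

lemma Intertwines.one : Intertwines (N := N) g w 1 1 := by
  intro i j s t
  have e : ((w i, w ∘ s) : FullIdx N) = (w j, w ∘ t) ↔ ((i, s) : FullIdx N) = (j, t) := by
    rw [← relabel_apply, ← relabel_apply]
    exact (relabel N w).injective.eq_iff
  simp only [Matrix.one_apply, e]
  split_ifs with h
  · simp only [Prod.mk.injEq] at h
    rw [h.1, h.2]
  · simp

lemma Intertwines.list_prod {l : List (Matrix (FullIdx N) (FullIdx N) ℂ)}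
    (h : ∀ A ∈ l, Intertwines g w A A) : Intertwines g w l.prod l.prod := by
  induction l with
  | nil => simpa using Intertwines.one
  | cons A l ih =>
    rw [List.prod_cons]
    exact (h A (by simp)).mul (ih fun B hB => h B (by simp [hB]))

lemma Intertwines.auxOp {K K' : Matrix (Fin 2) (Fin 2) ℂ}
    (h : ∀ i j, g i * K (w i) (w j) = g j * K' i j) :
    Intertwines g w (auxOp N K) (auxOp N K') := by
  intro i j s t
  have e : w ∘ s = w ∘ t ↔ s = t := w.injective.comp_left.eq_iff
  simp only [XXZ.auxOp, e]
  split_ifs with hst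
  · subst hst
    linear_combination weight g s * h i j
  · simp

/-- Away from site `n` the entries of `R₀ₙ` are diagonal, so the weights there cancel and only the
commutation of `G ⊗ G` with `R` on two factors is needed. -/
lemma Intertwines.R0n {η x : ℂ}
    (h : ∀ i j a b, g i * g a * Rmat η x (w i, w a) (w j, w b) =
      g j * g b * Rmat η x (i, a) (j, b)) (n : Fin N) :
    Intertwines g w (R0n N η n x) (R0n N η n x) := by
  intro i j s t
  simp only [XXZ.R0n, Function.comp_apply, w.injective.eq_iff]
  split_ifs with hst
  · have e : ∏ m ∈ univ.erase n, g (s m) = ∏ m ∈ univ.erase n, g (t m) :=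
      prod_congr rfl fun m hm => by rw [hst m (ne_of_mem_erase hm)]
    rw [weight, weight, ← mul_prod_erase univ _ (mem_univ n),
      ← mul_prod_erase univ (fun m => g (t m)) (mem_univ n), e]
    linear_combination (∏ m ∈ univ.erase n, g (t m)) * h i j (s n) (t n)
  · simp

/-- Partial transposition exchanges the auxiliary factors `g i / g j` and `g j / g i`, which agree
because `g²` is constant. -/
lemma Intertwines.pt0 {A A' : Matrix (FullIdx N) (FullIdx N) ℂ}
    (hg : ∀ i, g i ≠ 0) (hsq : ∀ i j, g i ^ 2 = g j ^ 2)
    (hA : Intertwines g w A A') : Intertwines g w (pt0 N A) (pt0 N A') := by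
  intro i j s t
  have h := hA j i s t
  simp only [XXZ.pt0]
  apply mul_left_cancel₀ (hg j)
  linear_combination g i * h + weight g t * A' (j, s) (i, t) * hsq i j

/-- The tensor power of a monomial matrix is monomial. -/
lemma prod_monomial {G : Matrix (Fin 2) (Fin 2) ℂ} (hG : ∀ i j, G i j = if j = w i then g i else 0)
    (s t : Fin N → Fin 2) :
    ∏ n, G (s n) (t n) = if t = w ∘ s then weight g s else 0 := by
  simp only [hG, prod_ite_zero, funext_iff, mem_univ, forall_const, Function.comp_apply, weight]

lemma tr0_conj {G : Matrix (Fin 2) (Fin 2) ℂ}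
    (hG : ∀ i j, G i j = if j = w i then g i else 0)
    (hw : ∀ i, w (w i) = i) (hinv : ∀ i, g i * g (w i) = 1)
    {A A' : Matrix (FullIdx N) (FullIdx N) ℂ} (hA : Intertwines g w A A')
    {Γ : Matrix (Fin N → Fin 2) (Fin N → Fin 2) ℂ} (hΓ : Γ = fun s t => ∏ n, G (s n) (t n)) :
    tr0 N A' = Γ * tr0 N A * Γ := by
  have hg : ∀ i, g i ≠ 0 := fun i => left_ne_zero_of_mul_eq_one (hinv i)
  ext s t
  have hww : ∀ u : Fin N → Fin 2, w ∘ w ∘ u = u := fun u => funext fun n => hw (u n)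
  have e : ∀ u : Fin N → Fin 2, t = w ∘ u ↔ u = w ∘ t := fun u =>
    ⟨fun h => by rw [h, hww], fun h => by rw [h, hww]⟩
  have hwt : weight g t * weight g (w ∘ t) = 1 := by
    simp [weight, ← prod_mul_distrib, hinv]
  have htr : weight g s * tr0 N A (w ∘ s) (w ∘ t) = weight g t * tr0 N A' s t := by
    simp only [tr0]
    rw [← Equiv.sum_comp w, mul_sum, mul_sum]
    refine sum_congr rfl fun i _ => mul_left_cancel₀ (hg i) ?_
    linear_combination hA i i s t
  have key : (Γ * tr0 N A * Γ) s t =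
      weight g s * tr0 N A (w ∘ s) (w ∘ t) * weight g (w ∘ t) := by
    have hΓ' : ∀ a b, Γ a b = if b = w ∘ a then weight g a else 0 := fun a b => by
      rw [hΓ]
      exact prod_monomial hG a b
    simp only [Matrix.mul_apply, hΓ', e, ite_mul, zero_mul, mul_ite, mul_zero,
      sum_ite_eq', mem_univ, if_true]
  rw [key, htr]
  linear_combination -tr0 N A' s t * hwt

lemma Intertwines.Mmono {η : ℂ} {ξ : Fin N → ℂ}
    (hR : ∀ x i j a b, g i * g a * Rmat η x (w i, w a) (w j, w b) =
      g j * g b * Rmat η x (i, a) (j, b)) (z : ℂ) :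
    Intertwines g w (Mmono N η ξ z) (Mmono N η ξ z) := by
  refine Intertwines.list_prod fun A hA => ?_
  obtain ⟨k, rfl⟩ := (List.mem_ofFn' _ _).1 hA
  exact Intertwines.R0n (hR _) _

/-- The sign `ε` records whether `G` commutes or anticommutes with `σʸ`; it enters `M̂` squared. -/
lemma Intertwines.Mhat {η : ℂ} {ξ : Fin N → ℂ} {ε : ℂ} (hε : ε * ε = 1)
    (hg : ∀ i, g i ≠ 0) (hsq : ∀ i j, g i ^ 2 = g j ^ 2)
    (hR : ∀ x i j a b, g i * g a * Rmat η x (w i, w a) (w j, w b) =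
      g j * g b * Rmat η x (i, a) (j, b))
    (hY : ∀ i j, g i * sigmaY (w i) (w j) = g j * (ε • sigmaY) i j) (z : ℂ) :
    Intertwines g w (Mhat N η ξ z) (Mhat N η ξ z) := by
  have hY' := Intertwines.auxOp (N := N) hY
  have h := ((hY'.mul ((Intertwines.Mmono (ξ := ξ) hR (-z)).pt0 hg hsq)).mul hY').smul ((-1) ^ N)
  have e : XXZ.auxOp N (ε • sigmaY) = ε • XXZ.auxOp N sigmaY := by
    ext p q
    simp [XXZ.auxOp]
  rw [e, smul_mul_assoc, smul_mul_assoc, mul_smul_comm, smul_smul ε ε, hε, one_smul] at h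
  exact h

/-- Conjugating both boundary matrices by `G` conjugates the transfer matrix by its tensor power
`Γ`. -/
lemma Tmat_conj {G : Matrix (Fin 2) (Fin 2) ℂ} {η : ℂ} {ξ : Fin N → ℂ} {ε : ℂ}
    (hG : ∀ i j, G i j = if j = w i then g i else 0)
    (hw : ∀ i, w (w i) = i) (hinv : ∀ i, g i * g (w i) = 1)
    (hsq : ∀ i j, g i ^ 2 = g j ^ 2) (hε : ε * ε = 1)
    (hR : ∀ x i j a b, g i * g a * Rmat η x (w i, w a) (w j, w b) =
      g j * g b * Rmat η x (i, a) (j, b))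
    (hY : ∀ i j, g i * sigmaY (w i) (w j) = g j * (ε • sigmaY) i j)
    {ζp ζm κp κm τp τm ζp' ζm' κp' κm' τp' τm' : ℂ}
    (hKp : ∀ x i j, g i * Kmat η x ζp κp τp (w i) (w j) = g j * Kmat η x ζp' κp' τp' i j)
    (hKm : ∀ x i j, g i * Kmat η x ζm κm τm (w i) (w j) = g j * Kmat η x ζm' κm' τm' i j)
    {Γ : Matrix (Fin N → Fin 2) (Fin N → Fin 2) ℂ} (hΓ : Γ = fun s t => ∏ n, G (s n) (t n))
    (z : ℂ) :
    Tmat N η ξ ζp' ζm' κp' κm' τp' τm' z = Γ * Tmat N η ξ ζp ζm κp κm τp τm z * Γ := by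
  have hg : ∀ i, g i ≠ 0 := fun i => left_ne_zero_of_mul_eq_one (hinv i)
  exact tr0_conj hG hw hinv
    ((((Intertwines.auxOp (hKp _)).mul (Intertwines.Mmono hR z)).mul
      (Intertwines.auxOp (hKm _))).mul (Intertwines.Mhat hε hg hsq hR hY z)) hΓ

end Monomial

/-- `σʸ K(x; ζ, κ, τ) = K(x; -ζ, κ, -τ) σʸ`, entrywise. -/
lemma Kmat_flip (η x ζ κ τ : ℂ) (i j : Fin 2) :
    (![-I, I] : Fin 2 → ℂ) i * Kmat η x ζ κ τ (Equiv.swap 0 1 i) (Equiv.swap 0 1 j) =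
      (![-I, I] : Fin 2 → ℂ) j * Kmat η x (-ζ) κ (-τ) i j := by
  have h1 : Complex.sinh (x - η / 2 + -ζ) = -Complex.sinh (ζ - x + η / 2) := by
    rw [← Complex.sinh_neg]; congr 1; ring
  have h2 : Complex.sinh (-ζ - x + η / 2) = -Complex.sinh (x - η / 2 + ζ) := by
    rw [← Complex.sinh_neg]; congr 1; ring
  fin_cases i <;> fin_cases j <;>
    simp [Kmat, Complex.sinh_neg, h1, h2, inv_neg]

/-- `σᶻ K(x; ζ, κ, τ) = K(x; ζ, -κ, τ) σᶻ`, entrywise. -/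
lemma Kmat_neg (η x ζ κ τ : ℂ) (i j : Fin 2) :
    (![1, -1] : Fin 2 → ℂ) i * Kmat η x ζ κ τ ((1 : Equiv.Perm (Fin 2)) i)
      ((1 : Equiv.Perm (Fin 2)) j) =
      (![1, -1] : Fin 2 → ℂ) j * Kmat η x ζ (-κ) τ i j := by
  fin_cases i <;> fin_cases j <;> simp [Kmat]

/-- the similarity transformations implementing two `Z₂` symmetries of the
boundary parameters: the transformed transfer matrices are conjugated by `Γ_y`, `Γ_z`, hence
isospectral. -/
theorem statement15
    (N : ℕ) (hN : 1 ≤ N) (η : ℂ) (ξ : Fin N → ℂ)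
    (ζp ζm κp κm τp τm : ℂ)
    (hζp : Complex.sinh ζp ≠ 0) (hζm : Complex.sinh ζm ≠ 0) (z : ℂ) :
    Tmat N η ξ (-ζp) (-ζm) κp κm (-τp) (-τm) z =
      GammaY N * Tmat N η ξ ζp ζm κp κm τp τm z * GammaY N ∧
    Tmat N η ξ ζp ζm (-κp) (-κm) τp τm z =
      GammaZ N * Tmat N η ξ ζp ζm κp κm τp τm z * GammaZ N := by
  constructor
  · refine Tmat_conj (G := sigmaY) (g := ![-I, I]) (w := Equiv.swap 0 1) (ε := 1) ?_ ?_ ?_ ?_ ?_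
      ?_ ?_ (fun x => Kmat_flip η x ζp κp τp) (fun x => Kmat_flip η x ζm κm τm) rfl z
    · intro i j
      fin_cases i <;> fin_cases j <;> simp [sigmaY]
    · simp
    · intro i
      fin_cases i <;> simp
    · intro i j
      fin_cases i <;> fin_cases j <;> simp
    · simp
    · intro x i j a b
      fin_cases i <;> fin_cases j <;> fin_cases a <;> fin_cases b <;> simp [Rmat]
    · intro i j
      fin_cases i <;> fin_cases j <;> simp [sigmaY]
  · refine Tmat_conj (G := sigmaZ) (g := ![1, -1]) (w := 1) (ε := -1) ?_ ?_ ?_ ?_ ?_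
      ?_ ?_ (fun x => Kmat_neg η x ζp κp τp) (fun x => Kmat_neg η x ζm κm τm) rfl z
    · intro i j
      fin_cases i <;> fin_cases j <;> simp [sigmaZ]
    · simp
    · intro i
      fin_cases i <;> simp
    · intro i j
      fin_cases i <;> fin_cases j <;> simp
    · simp
    · intro x i j a b
      fin_cases i <;> fin_cases j <;> fin_cases a <;> fin_cases b <;> simp [Rmat]
    · intro i j
      fin_cases i <;> fin_cases j <;> simp [sigmaY]

end XXZ
end
end
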